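/- arXiv:2311.00411 — 2 statements merged into one kernel-verified Lean document; each statement's English description precedes it below -/
import Mathlib

section
/- Let k be a field whose theory is model complete in the language of rings L_ring = {0, 1, +, ·}. Then k is perfect, i.e. either k has characteristic 0, or k has characteristic p > 0 and every element of k has a p-th root in k. -/
/-!
Let `R` be a reduced commutative ring of exponential characteristic `p`. The Frobenius map embeds
`R` into itself, for the language of rings, and it is the interpretation of the term `x ^ p`. If
`R` is a model of a model complete theory, this embedding is elementary; each `a ^ p` satisfies
`∃ y, y ^ p = x`, hence so does each `a`.

Model completeness is available only for models in the universe `w`, where `R` need not live. For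
finite `R` this is harmless, since an injective self-map is then surjective. For infinite `R`, a
model in `w` elementarily equivalent to `R` is supplied by the Löwenheim–Skolem theorem. That a
given term interprets a self-embedding, and that this embedding is surjective, are both properties
of the complete theory, so no algebra has to be carried over to the new model.
-/

open FirstOrder Language FirstOrder.Ring

universe w

/-- A theory `T` is model complete if every embedding between models of `T` is elementary. -/
def TheoryIsModelComplete {L : FirstOrder.Language} (T : L.Theory) : Prop :=
  ∀ (M N : Type w) [L.Structure M] [L.Structure N], M ⊨ T → N ⊨ T →
    ∀ f : M ↪[L] N, ∀ (n : ℕ) (φ : L.Formula (Fin n)) (x : Fin n → M),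
      φ.Realize (f ∘ x) ↔ φ.Realize x

section ElementaryEquivalence

variable {L : FirstOrder.Language} {M N : Type*} [L.Structure M] [L.Structure N]

theorem models_iAlls_relabel_inr_iff {α : Type*} [Finite α] (φ : L.Formula α) :
    M ⊨ (φ.relabel Sum.inr : L.Formula (Empty ⊕ α)).iAlls α ↔ ∀ v : α → M, φ.Realize v := by
  simp only [Sentence.Realize, Formula.realize_iAlls, Formula.realize_relabel,
    Function.comp_def, Sum.elim_inr]

theorem forall_realize_iff_of_elementarilyEquivalent (h : M ≅[L] N) {α : Type*} [Finite α]
    (φ : L.Formula α) : (∀ v : α → M, φ.Realize v) ↔ ∀ v : α → N, φ.Realize v := by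
  rw [← models_iAlls_relabel_inr_iff, ← models_iAlls_relabel_inr_iff]
  exact h.realize_sentence _

theorem exists_elementarilyEquivalent_of_countable (M : Type*) [L.Structure M] [Infinite M]
    [Countable L.Symbols] : ∃ N : CategoryTheory.Bundled.{w} L.Structure, M ≅[L] N := by
  obtain ⟨N, hN, -⟩ := exists_elementarilyEquivalent_card_eq L M Cardinal.aleph0.{w} le_rfl
    (by
      rw [Cardinal.lift_aleph0, Cardinal.lift_le_aleph0]
      exact Cardinal.mk_le_aleph0)
  exact ⟨N, hN⟩

end ElementaryEquivalence

section TermMap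

variable {L : FirstOrder.Language} {M N : Type*} [L.Structure M] [L.Structure N]

/-- The self-map of a structure `M` interpreting a term `t` in one free variable. -/
def termMap (t : L.Term Unit) (M : Type*) [L.Structure M] (x : M) : M :=
  t.realize fun _ => x

/-- The formula `∃ y, t(y) = x` in the free variable `x`, defining the range of `termMap t M`. -/
noncomputable def rangeFormula (t : L.Term Unit) {α : Type*} (x : α) : L.Formula α :=
  ((t.relabel Sum.inr).equal (Term.var (Sum.inl x)) : L.Formula (α ⊕ Unit)).iExs Unit

/-- The term `t` interprets an embedding of `M` into itself. -/
def InterpretsEmbedding (t : L.Term Unit) (M : Type*) [L.Structure M] : Prop :=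
  ∃ f : M ↪[L] M, ⇑f = termMap t M

theorem realize_subst_eq_termMap (t : L.Term Unit) {α : Type*} (s : L.Term α) (v : α → M) :
    (t.subst fun _ => s).realize v = termMap t M (s.realize v) :=
  Term.realize_subst

theorem realize_rangeFormula (t : L.Term Unit) {α : Type*} (x : α) (v : α → M) :
    (rangeFormula t x).Realize v ↔ v x ∈ Set.range (termMap t M) := by
  simp only [rangeFormula, Formula.realize_iExs, Formula.realize_equal, Term.realize_relabel,
    Term.realize_var, Sum.elim_comp_inr, Sum.elim_inl]
  exact ⟨fun ⟨y, hy⟩ => ⟨y (), hy⟩, fun ⟨y, hy⟩ => ⟨fun _ => y, hy⟩⟩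

theorem surjective_termMap_iff (t : L.Term Unit) :
    Function.Surjective (termMap t M) ↔
      ∀ v : Unit → M, (rangeFormula t ()).Realize v := by
  simp only [realize_rangeFormula]
  exact ⟨fun h v => h (v ()), fun h x => h fun _ => x⟩

theorem surjective_termMap_iff_of_elementarilyEquivalent (h : M ≅[L] N) (t : L.Term Unit) :
    Function.Surjective (termMap t M) ↔ Function.Surjective (termMap t N) := by
  rw [surjective_termMap_iff, surjective_termMap_iff]
  exact forall_realize_iff_of_elementarilyEquivalent h _

theorem injective_termMap_of_elementarilyEquivalent (h : M ≅[L] N) {t : L.Term Unit}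
    (ht : Function.Injective (termMap t M)) : Function.Injective (termMap t N) := by
  let x (i : Fin 2) : L.Term (Fin 2) := Term.var i
  let φ : L.Formula (Fin 2) :=
    ((t.subst fun _ => x 0).equal (t.subst fun _ => x 1)).imp ((x 0).equal (x 1))
  have hφ := (forall_realize_iff_of_elementarilyEquivalent h φ).1
  simp only [φ, x, Formula.realize_imp, Formula.realize_equal, realize_subst_eq_termMap,
    Term.realize_var] at hφ
  intro a b
  exact hφ (fun v hv => ht hv) ![a, b]

theorem termMap_funMap_of_elementarilyEquivalent (h : M ≅[L] N) {t : L.Term Unit} {n : ℕ}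
    {F : L.Functions n}
    (hF : ∀ v : Fin n → M,
      termMap t M (Structure.funMap F v) = Structure.funMap F (termMap t M ∘ v))
    (v : Fin n → N) :
    termMap t N (Structure.funMap F v) = Structure.funMap F (termMap t N ∘ v) := by
  let φ : L.Formula (Fin n) :=
    (t.subst fun _ => Term.func F Term.var).equal
      (Term.func F fun i => t.subst fun _ => Term.var i)
  have hφ := (forall_realize_iff_of_elementarilyEquivalent h φ).1
  simp only [φ, Formula.realize_equal, realize_subst_eq_termMap, Term.realize_func,
    Term.realize_var] at hφ
  exact hφ hF v

theorem relMap_termMap_iff_of_elementarilyEquivalent (h : M ≅[L] N) {t : L.Term Unit} {n : ℕ}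
    {R : L.Relations n}
    (hR : ∀ v : Fin n → M, Structure.RelMap R (termMap t M ∘ v) ↔ Structure.RelMap R v)
    (v : Fin n → N) : Structure.RelMap R (termMap t N ∘ v) ↔ Structure.RelMap R v := by
  let φ : L.Formula (Fin n) :=
    (R.formula fun i => t.subst fun _ => Term.var i).iff (R.formula Term.var)
  have hφ := (forall_realize_iff_of_elementarilyEquivalent h φ).1
  simp only [φ, Formula.realize_iff, Formula.realize_rel, realize_subst_eq_termMap,
    Term.realize_var] at hφ
  exact hφ hR v

theorem InterpretsEmbedding.of_elementarilyEquivalent {t : L.Term Unit}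
    (ht : InterpretsEmbedding t M) (h : M ≅[L] N) : InterpretsEmbedding t N := by
  obtain ⟨f, hf⟩ := ht
  let g : N ↪[L] N :=
    { toFun := termMap t N
      inj' := injective_termMap_of_elementarilyEquivalent h (hf ▸ f.injective)
      map_fun' := fun F =>
        termMap_funMap_of_elementarilyEquivalent h (hf ▸ StrongHomClass.map_fun f F)
      map_rel' := fun R =>
        relMap_termMap_iff_of_elementarilyEquivalent h (hf ▸ StrongHomClass.map_rel f R) }
  exact ⟨g, rfl⟩

end TermMap

section ModelComplete

variable {L : FirstOrder.Language} {T : L.Theory}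

theorem TheoryIsModelComplete.surjective_termMap_of_same_universe (hT : TheoryIsModelComplete.{w} T)
    {M : Type w} [L.Structure M] (hM : M ⊨ T) {t : L.Term Unit}
    (ht : InterpretsEmbedding t M) : Function.Surjective (termMap t M) := by
  intro a
  obtain ⟨f, hf⟩ := ht
  have h := hT M M hM hM f 1 (rangeFormula t 0) fun _ => a
  rw [realize_rangeFormula, realize_rangeFormula] at h
  exact h.1 ⟨a, (congrFun hf a).symm⟩

theorem TheoryIsModelComplete.surjective_termMap [Countable L.Symbols]
    (hT : TheoryIsModelComplete.{w} T) {M : Type*} [L.Structure M] (hM : M ⊨ T)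
    {t : L.Term Unit} (ht : InterpretsEmbedding t M) : Function.Surjective (termMap t M) := by
  rcases finite_or_infinite M with _ | _
  · obtain ⟨f, hf⟩ := ht
    exact hf ▸ Finite.surjective_of_injective f.injective
  · obtain ⟨N, hN⟩ := exists_elementarilyEquivalent_of_countable.{w} (L := L) M
    rw [surjective_termMap_iff_of_elementarilyEquivalent hN]
    exact hT.surjective_termMap_of_same_universe (hN.theory_model_iff.1 hM)
      (ht.of_elementarilyEquivalent hN)

end ModelComplete

section Frobenius

variable (R : Type*) [CommRing R] [CompatibleRing R] (p : ℕ)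

/-- The term `x ^ p` in the language of rings. -/
noncomputable def powTerm : Language.ring.Term Unit :=
  termOfFreeCommRing (FreeCommRing.of () ^ p)

theorem termMap_powTerm : termMap (powTerm p) R = (· ^ p) := by
  funext x
  simp only [termMap, powTerm, realize_termOfFreeCommRing, map_pow, FreeCommRing.lift_of]

/-- The Frobenius endomorphism of a reduced ring, as an embedding in the language of rings. -/
def frobeniusEmbedding [IsReduced R] [ExpChar R p] : R ↪[Language.ring] R where
  toFun := frobenius R p
  inj' := frobenius_inj R p
  map_fun' F := by cases F <;> simp
  map_rel' := isEmptyElim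

theorem interpretsEmbedding_powTerm [IsReduced R] [ExpChar R p] :
    InterpretsEmbedding (powTerm p) R :=
  ⟨frobeniusEmbedding R p, (termMap_powTerm R p).symm⟩

theorem charZero_or_exists_pow_eq_of_perfectRing {S : Type*} [CommSemiring S] {p : ℕ}
    [hp : ExpChar S p] (hS : PerfectRing S p) :
    CharZero S ∨ ∃ p : ℕ, p.Prime ∧ CharP S p ∧ ∀ a : S, ∃ b : S, b ^ p = a := by
  have hroot : ∀ a : S, ∃ b : S, b ^ p = a := hS.bijective_frobenius.surjective
  cases hp with
  | zero => exact .inl inferInstance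
  | prime hprime => exact .inr ⟨p, hprime, inferInstance, hroot⟩

end Frobenius

theorem field_model_complete_is_perfect_general {T : Language.ring.Theory}
    (hT : TheoryIsModelComplete.{w} T) (R : Type*) [CommRing R] [IsReduced R] [CompatibleRing R]
    (hR : R ⊨ T) (p : ℕ) [ExpChar R p] : PerfectRing R p := by
  refine PerfectRing.ofSurjective R p ?_
  have h := hT.surjective_termMap hR (interpretsEmbedding_powTerm R p)
  rwa [termMap_powTerm] at h

/-- Let `k` be a field whose theory is model complete in the language of
rings.  Then `k` is perfect: either `k` has characteristic `0`, or `k` has characteristic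
`p > 0` and every element of `k` has a `p`-th root in `k`. -/
theorem field_model_complete_is_perfect
    (k : Type*) [Field k]
    (hmc : TheoryIsModelComplete.{w}
      (@FirstOrder.Language.completeTheory Language.ring k (compatibleRingOfRing k).toStructure)) :
    CharZero k ∨ ∃ p : ℕ, p.Prime ∧ CharP k p ∧ ∀ a : k, ∃ b : k, b ^ p = a := by
  let := compatibleRingOfRing k
  obtain ⟨p, _⟩ := ExpChar.exists k
  exact charZero_or_exists_pow_eq_of_perfectRing
    (field_model_complete_is_perfect_general hmc k inferInstance p)
end

section
/- Let p be a prime and let k₁ ⊆ k₂ be perfect fields of characteristic p such that k₁ is an elementary substructure of k₂ in the language of rings. Then the induced embedding of the fraction field of W(k₁) into the fraction field of W(k₂) (arising from the ring homomorphism W(k₁) → W(k₂) induced by the inclusion k₁ ⊆ k₂) is an elementary embedding in the language of rings. -/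
/-!
The proof is an Ax–Kochen–Ershov argument carried out by back-and-forth between ultrapowers.

By the theorem of Łoś it suffices to compare the ultrapowers of the two fraction fields along a
nonprincipal ultrafilter on `ℕ`. These ultrapowers are countably saturated, and they carry the
coarse valuation `cval` obtained from the `p`-adic one by inverting `p`. It has residue
characteristic zero (`residueCharZero_cval`), and it is henselian (`isHenselianValuation_cval`)
because the Witt vectors over the ring of sequences in `k` are `p`-adically complete. A nonzero
element of the ultrapower is, up to an element of `1 + 𝔪`, a nonstandard power of `p` times a Witt
vector over the ultrapower of the residue field. A partial map between the ultrapowers of `k₁` and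
`k₂`, given by two embeddings of a perfect field `L`, therefore determines a correspondence
`wittCorr` of leading terms, and this correspondence is saturated (`wittCorr_isSaturated`).

In residue characteristic zero, a partial isomorphism of henselian fields that respects leading
terms extends to every countable relatively algebraically closed subfield whose leading terms all
have a match (`LeadCorr.IsPartialIso.exists_extension`). The key point is `LeadCorr.eval_mem_lead`:
expanding a polynomial around the closest root of one of its Hasse derivatives, its value at a new
point has no cancellation, so its leading term is determined by those of the Taylor coefficients.
Algebraic elements are handled by the Newton form of Hensel's lemma
(`LeadCorr.exists_root_match`), and Zorn's lemma finishes.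

An elementary partial map of the residue fields can be enlarged by saturation
(`IsElem.exists_extension`), which supplies the missing matches of leading terms. Hence the
positions `IsPosition` have the back-and-forth property (`IsPosition.forth`, `IsPosition.back`) and
preserve all formulas (`IsPosition.realize_iff`). Since `k₁ → k₂` is elementary, any countable part
of the graph of the induced map on fraction fields lies in a position (`exists_isPosition`).
-/

open FirstOrder Language FirstOrder.Ring

noncomputable section

variable (p : ℕ) [Fact p.Prime] (k₁ k₂ : Type*) [Field k₁] [Field k₂]
  [CharP k₁ p] [CharP k₂ p] [PerfectRing k₁ p] [PerfectRing k₂ p]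

/-- The embedding of fraction fields of the `p`-typical Witt vector rings induced by a
ring embedding `g : k₁ →+* k₂`. -/
def wittFractionMap (g : k₁ →+* k₂) :
    FractionRing (WittVector p k₁) →+* FractionRing (WittVector p k₂) :=
  IsFractionRing.lift
    (g := (algebraMap (WittVector p k₂) (FractionRing (WittVector p k₂))).comp
      (WittVector.map g))
    (by
      intro x y hxy
      simp only [RingHom.comp_apply] at hxy
      exact WittVector.map_injective g g.injective
        (IsFractionRing.injective (WittVector p k₂) (FractionRing (WittVector p k₂)) hxy))

/-! ### Rescaled Taylor expansions -/

section Rescale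
open Polynomial

variable {R : Type*} [CommRing R]

lemma eval_hasseDeriv_hasseDeriv (q : R[X]) (r : R) (m n : ℕ) :
    (hasseDeriv m (hasseDeriv n q)).eval r =
      ((m + n).choose n : R) * (hasseDeriv (m + n) q).eval r := by
  have hcomp := LinearMap.congr_fun (hasseDeriv_comp (R := R) m n) q
  rw [LinearMap.comp_apply, LinearMap.smul_apply] at hcomp
  rw [hcomp, eval_smul, nsmul_eq_mul, Nat.choose_symm_add]

lemma hasseDeriv_taylor (q : R[X]) (r : R) (n : ℕ) :
    hasseDeriv n (taylor r q) = taylor r (hasseDeriv n q) := by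
  ext m
  rw [hasseDeriv_coeff, taylor_coeff, taylor_coeff, eval_hasseDeriv_hasseDeriv]

lemma map_hasseDeriv {S : Type*} [CommRing S] (f : R →+* S) (q : R[X]) (n : ℕ) :
    (hasseDeriv n q).map f = hasseDeriv n (q.map f) := by
  ext m
  simp only [coeff_map, hasseDeriv_coeff, map_mul, map_natCast]

lemma taylor_coeff_mem {N : Subring R} {q : R[X]} (hq : ∀ i, q.coeff i ∈ N) {r : R} (hr : r ∈ N)
    (i : ℕ) : (taylor r q).coeff i ∈ N := by
  rw [taylor_coeff, eval_eq_sum_range]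
  refine sum_mem fun j _ ↦ mul_mem ?_ (pow_mem hr _)
  rw [hasseDeriv_coeff]
  exact mul_mem (natCast_mem _ _) (hq _)

lemma eval_mem_of_coeff_mem {N : Subring R} {q : R[X]} (hq : ∀ i, q.coeff i ∈ N) {r : R}
    (hr : r ∈ N) : q.eval r ∈ N :=
  taylor_coeff_zero r q ▸ taylor_coeff_mem hq hr 0

/-- The polynomial `c * q (a + d * X)`: the Taylor expansion of `q` at `a`, with the variable
rescaled by `d` and the values by `c`. -/
def rescale (c a d : R) (q : R[X]) : R[X] := C c * (taylor a q).comp (C d * X)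

lemma rescale_coeff (c a d : R) (q : R[X]) (i : ℕ) :
    (rescale c a d q).coeff i = c * ((taylor a q).coeff i * d ^ i) := by
  rw [rescale, coeff_C_mul, comp_C_mul_X_coeff]

lemma rescale_eval (c a d : R) (q : R[X]) (r : R) :
    (rescale c a d q).eval r = c * q.eval (a + d * r) := by
  simp [rescale, eval_comp, taylor_eval, add_comm]

lemma taylor_one_rescale_coeff_zero (c a z : R) (q : R[X]) :
    (taylor 1 (rescale c a (z - a) q)).coeff 0 = c * q.eval z := by
  rw [taylor_coeff_zero, rescale_eval, mul_one, add_sub_cancel]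

lemma rescale_zero (c a d : R) : rescale c a d 0 = 0 := by simp [rescale]

lemma map_rescale {S : Type*} [CommRing S] (f : R →+* S) (c a d : R) (q : R[X]) :
    (rescale c a d q).map f = rescale (f c) (f a) (f d) (q.map f) := by
  simp [rescale, Polynomial.map_comp]

lemma hasseDeriv_rescale (c a d : R) (q : R[X]) (n : ℕ) :
    hasseDeriv n (rescale c a d q) = rescale (c * d ^ n) a d (hasseDeriv n q) := by
  ext m
  rw [hasseDeriv_coeff, rescale_coeff, rescale_coeff, taylor_coeff, taylor_coeff,
    eval_hasseDeriv_hasseDeriv]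
  ring

end Rescale

/-! ### Henselian valuations of residue characteristic zero -/

section Valued
open Polynomial

variable {K Γ : Type*} [Field K] [LinearOrderedCommGroupWithZero Γ] {v : Valuation K Γ}

/-- `v` is henselian, in Newton's form of Hensel's lemma at the point `0`: a `v`-integral polynomial
whose constant coefficient is small and whose linear coefficient is a unit has a small root. -/
def IsHenselianValuation (v : Valuation K Γ) : Prop :=
  ∀ q : K[X], (∀ i, v (q.coeff i) ≤ 1) → v (q.coeff 0) < 1 → v (q.coeff 1) = 1 →
    ∃ z, v z < 1 ∧ q.eval z = 0

/-- The residue field of `v` has characteristic zero: nonzero natural numbers are `v`-units. -/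
def ResidueCharZero (v : Valuation K Γ) : Prop := ∀ n : ℕ, n ≠ 0 → v (n : K) = 1

lemma valuation_natCast_le_one (v : Valuation K Γ) (n : ℕ) : v (n : K) ≤ 1 :=
  natCast_mem v.integer n

lemma valuation_taylor_coeff_le_one {q : K[X]} (hq : ∀ i, v (q.coeff i) ≤ 1) {r : K} (hr : v r ≤ 1)
    (i : ℕ) : v ((taylor r q).coeff i) ≤ 1 :=
  taylor_coeff_mem (N := v.integer) hq hr i

lemma valuation_taylor_coeff_lt_one {q : K[X]} (hq : ∀ i, v (q.coeff i) < 1) {r : K} (hr : v r ≤ 1)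
    (i : ℕ) : v ((taylor r q).coeff i) < 1 := by
  rw [taylor_coeff, eval_eq_sum_range]
  refine v.map_sum_lt one_ne_zero fun j _ ↦ ?_
  rw [hasseDeriv_coeff, map_mul, map_mul, map_pow]
  exact mul_lt_one_of_nonneg_of_lt_one_left zero_le
    (mul_lt_one_of_nonneg_of_lt_one_right (valuation_natCast_le_one v _) zero_le (hq _))
    (pow_le_one' hr _)

/-- The index `j + 1` is the multiplicity of the residual root of `q` at `r`. -/
lemma exists_taylor_coeff_eq_one {q : K[X]} (hq : ∀ i, v (q.coeff i) ≤ 1)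
    (hunit : ∃ i, v (q.coeff i) = 1) {r : K} (hr : v r ≤ 1) (hsmall : v (q.eval r) < 1) :
    ∃ j, v ((taylor r q).coeff (j + 1)) = 1 ∧ ∀ i ≤ j, v ((taylor r q).coeff i) < 1 := by
  have hle := valuation_taylor_coeff_le_one hq hr
  have hex : ∃ i, v ((taylor r q).coeff i) = 1 := by
    by_contra! hne
    obtain ⟨i, hi⟩ := hunit
    have hlt := valuation_taylor_coeff_lt_one (fun i ↦ (hle i).lt_of_ne (hne i))
      (r := -r) (by rwa [Valuation.map_neg]) i
    rw [taylor_taylor, neg_add_cancel, taylor_zero] at hlt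
    exact hlt.ne hi
  classical
  have hspec := Nat.find_spec hex
  rcases hfind : Nat.find hex with - | j
  · rw [hfind, taylor_coeff_zero] at hspec
    exact absurd hspec hsmall.ne
  · exact ⟨j, hfind ▸ hspec, fun i hi ↦ (hle i).lt_of_ne (Nat.find_min hex (by lia))⟩

/-- Dividing out the residual multiplicity `j + 1` by differentiating `j` times leaves a simple
residual root, which Hensel's lemma lifts. -/
lemma IsHenselianValuation.exists_eval_hasseDeriv_eq_zero (hv : IsHenselianValuation v)
    (hchar : ResidueCharZero v) {q : K[X]} (hq : ∀ i, v (q.coeff i) ≤ 1) {r : K} (hr : v r ≤ 1)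
    {j : ℕ} (hunit : v ((taylor r q).coeff (j + 1)) = 1)
    (hsmall : v ((taylor r q).coeff j) < 1) :
    ∃ z, v z < 1 ∧ (hasseDeriv j q).eval (r + z) = 0 := by
  obtain ⟨z, hz, hroot⟩ := hv (hasseDeriv j (taylor r q))
    (fun i ↦ by
      rw [hasseDeriv_coeff, map_mul]
      exact mul_le_one' (valuation_natCast_le_one v _) (valuation_taylor_coeff_le_one hq hr _))
    (by
      rw [hasseDeriv_coeff, map_mul, zero_add]
      exact mul_lt_one_of_nonneg_of_lt_one_right (valuation_natCast_le_one v _) zero_le hsmall)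
    (by
      rw [hasseDeriv_coeff, map_mul, hchar _ (Nat.choose_pos (by lia)).ne', one_mul, add_comm 1 j,
        hunit])
  rw [hasseDeriv_taylor, taylor_eval] at hroot
  exact ⟨z, hz, by rwa [add_comm]⟩

lemma hasseDeriv_ne_zero_of_taylor_coeff (hchar : ResidueCharZero v) {q : K[X]} {r : K} {j : ℕ}
    (hunit : v ((taylor r q).coeff (j + 1)) = 1) : hasseDeriv j q ≠ 0 := by
  intro hzero
  have heval := congrArg v (eval_hasseDeriv_hasseDeriv q r 1 j)
  rw [add_comm 1 j, map_mul, hchar _ (Nat.choose_pos (by lia)).ne', ← taylor_coeff r q,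
    hunit, hzero] at heval
  simp at heval

/-- If `q` suffers cancellation at `a + d` when expanded around `a`, then some Hasse derivative
of `q` has a root closer to `a + d` than `a`. -/
lemma IsHenselianValuation.exists_closer_root (hv : IsHenselianValuation v)
    (hchar : ResidueCharZero v) {q : K[X]} {c a d : K} (hd : d ≠ 0)
    (hle : ∀ i, v ((rescale c a d q).coeff i) ≤ 1) (hunit : ∃ i, v ((rescale c a d q).coeff i) = 1)
    (hsmall : v ((rescale c a d q).eval 1) < 1) :
    ∃ j β, hasseDeriv j q ≠ 0 ∧ (hasseDeriv j q).eval β = 0 ∧ v (a + d - β) < v d ∧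
      v ((taylor 1 (rescale c a d q)).coeff (j + 1)) = 1 := by
  have hone : v (1 : K) ≤ 1 := v.map_one.le
  have hc : c ≠ 0 := by
    rintro rfl
    simp [rescale_coeff] at hunit
  obtain ⟨j, hj, hlt⟩ := exists_taylor_coeff_eq_one hle hunit hone hsmall
  obtain ⟨z, hz, hroot⟩ :=
    hv.exists_eval_hasseDeriv_eq_zero hchar hle hone hj (hlt j le_rfl)
  refine ⟨j, a + d * (1 + z), fun hzero ↦ ?_, ?_, ?_, hj⟩
  · refine hasseDeriv_ne_zero_of_taylor_coeff hchar hj ?_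
    rw [hasseDeriv_rescale, hzero, rescale_zero]
  · rw [hasseDeriv_rescale, rescale_eval] at hroot
    exact (mul_eq_zero.1 hroot).resolve_left (mul_ne_zero hc (pow_ne_zero _ hd))
  · rw [show a + d - (a + d * (1 + z)) = -(d * z) by ring, Valuation.map_neg, map_mul]
    exact mul_lt_of_lt_one_right (zero_lt_iff.2 (v.ne_zero_iff.2 hd)) hz

lemma exists_dominant_term (v : Valuation K Γ) {q : K[X]} (hq : q ≠ 0) {d : K} (hd : d ≠ 0) :
    ∃ m, q.coeff m * d ^ m ≠ 0 ∧ ∀ i, v (q.coeff i * d ^ i) ≤ v (q.coeff m * d ^ m) := by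
  obtain ⟨m, hm, hmax⟩ := q.support.exists_max_image (fun i ↦ v (q.coeff i * d ^ i))
    (nonempty_support_iff.2 hq)
  refine ⟨m, mul_ne_zero (mem_support_iff.1 hm) (pow_ne_zero m hd), fun i ↦ ?_⟩
  by_cases hi : i ∈ q.support
  · exact hmax i hi
  · simp [notMem_support_iff.1 hi]

end Valued

section HasseDerivRoots
open Polynomial

variable {K : Type*} [Field K]

/-- The roots of all nonzero Hasse derivatives of `q` of order at least `m`. -/
def hasseDerivRoots (m : ℕ) (q : K[X]) : Finset K :=
  letI := Classical.decEq K
  (Finset.Icc m q.natDegree).biUnion fun j ↦ (hasseDeriv j q).roots.toFinset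

lemma mem_hasseDerivRoots {m : ℕ} {q : K[X]} {β : K} :
    β ∈ hasseDerivRoots m q ↔ ∃ j, m ≤ j ∧ hasseDeriv j q ≠ 0 ∧ (hasseDeriv j q).eval β = 0 := by
  classical
  simp only [hasseDerivRoots, Finset.mem_biUnion, Finset.mem_Icc, Multiset.mem_toFinset, mem_roots',
    IsRoot.def]
  refine ⟨fun ⟨j, hj, hroot⟩ ↦ ⟨j, hj.1, hroot⟩, fun ⟨j, hmj, hroot⟩ ↦ ⟨j, ⟨hmj, ?_⟩, hroot⟩⟩
  by_contra! hlt
  exact hroot.1 (hasseDeriv_eq_zero_of_lt_natDegree q j hlt)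

end HasseDerivRoots

/-! ### Correspondences of leading terms -/

section LeadCorr
open Polynomial

variable {K₁ K₂ Γ₁ Γ₂ : Type*} [Field K₁] [Field K₂]
  [LinearOrderedCommGroupWithZero Γ₁] [LinearOrderedCommGroupWithZero Γ₂]

/-- A correspondence between the leading terms of two valued fields, where the leading term of an
element is its class modulo multiplication by `1 + 𝔪`. The set `lead` consists of the pairs with
matching leading terms, and the subring `res` of the integral pairs with matching residues. -/
structure LeadCorr (v₁ : Valuation K₁ Γ₁) (v₂ : Valuation K₂ Γ₂) where
  lead : Set (K₁ × K₂)
  res : Subring (K₁ × K₂)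
  zero_mem : 0 ∈ lead
  mul_mem : ∀ {a b}, a ∈ lead → b ∈ lead → a * b ∈ lead
  inv_mem : ∀ {a}, a ∈ lead → a⁻¹ ∈ lead
  eq_zero_iff : ∀ {a}, a ∈ lead → (a.1 = 0 ↔ a.2 = 0)
  le_one_iff : ∀ {a}, a ∈ lead → (v₁ a.1 ≤ 1 ↔ v₂ a.2 ≤ 1)
  one_add_mem : ∀ {a}, v₁ a.1 < 1 → v₂ a.2 < 1 → 1 + a ∈ lead
  le_one_of_mem_res : ∀ {a}, a ∈ res → v₁ a.1 ≤ 1 ∧ v₂ a.2 ≤ 1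
  lt_one_iff_of_mem_res : ∀ {a}, a ∈ res → (v₁ a.1 < 1 ↔ v₂ a.2 < 1)
  mem_res_of_mem_lead : ∀ {a}, a ∈ lead → v₁ a.1 ≤ 1 → a ∈ res
  mem_lead_of_mem_res : ∀ {a}, a ∈ res → v₁ a.1 = 1 → a ∈ lead

variable {v₁ : Valuation K₁ Γ₁} {v₂ : Valuation K₂ Γ₂} (c : LeadCorr v₁ v₂)

namespace LeadCorr

lemma one_mem : 1 ∈ c.lead := c.mem_lead_of_mem_res c.res.one_mem v₁.map_one

lemma pow_mem {a : K₁ × K₂} (ha : a ∈ c.lead) (n : ℕ) : a ^ n ∈ c.lead := by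
  induction n with
  | zero => simpa using c.one_mem
  | succ n ih => exact pow_succ a n ▸ c.mul_mem ih ha

lemma snd_ne_zero {a : K₁ × K₂} (ha : a ∈ c.lead) (h : a.1 ≠ 0) : a.2 ≠ 0 :=
  mt (c.eq_zero_iff ha).2 h

lemma eq_zero_of_fst {a : K₁ × K₂} (ha : a ∈ c.lead) (h : a.1 = 0) : a = 0 :=
  Prod.ext h ((c.eq_zero_iff ha).1 h)

lemma mul_inv_cancel {a : K₁ × K₂} (ha : a ∈ c.lead) (h : a.1 ≠ 0) : a * a⁻¹ = 1 :=
  Prod.ext (mul_inv_cancel₀ h) (mul_inv_cancel₀ (c.snd_ne_zero ha h))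

lemma valuation_le_iff {a b : K₁ × K₂} (ha : a ∈ c.lead) (hb : b ∈ c.lead) (h : b.1 ≠ 0) :
    v₁ a.1 ≤ v₁ b.1 ↔ v₂ a.2 ≤ v₂ b.2 := by
  have hquot := c.le_one_iff (c.mul_mem ha (c.inv_mem hb))
  simp only [Prod.fst_mul, Prod.snd_mul, Prod.fst_inv, Prod.snd_inv, map_mul, map_inv₀] at hquot
  simp only [← div_eq_mul_inv] at hquot
  rwa [div_le_one₀ (zero_lt_iff.2 (v₁.ne_zero_iff.2 h)),
    div_le_one₀ (zero_lt_iff.2 (v₂.ne_zero_iff.2 (c.snd_ne_zero hb h)))] at hquot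

lemma snd_eq_one {a : K₁ × K₂} (ha : a ∈ c.res) (h : v₁ a.1 = 1) : v₂ a.2 = 1 :=
  (c.le_one_of_mem_res ha).2.eq_of_not_lt fun hlt ↦
    ((c.lt_one_iff_of_mem_res ha).2 hlt).ne h

lemma add_mem {a b : K₁ × K₂} (ha : a ∈ c.lead) (hb : b ∈ c.lead)
    (hle_a : v₁ a.1 ≤ v₁ (a + b).1) (hle_b : v₁ b.1 ≤ v₁ (a + b).1) : a + b ∈ c.lead := by
  wlog hab : v₁ b.1 ≤ v₁ a.1 generalizing a b
  · rw [add_comm] at hle_a hle_b ⊢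
    exact this hb ha hle_b hle_a (le_of_not_ge hab)
  rcases eq_or_ne a.1 0 with ha0 | ha0
  · have hb0 : b.1 = 0 := by
      rw [ha0, map_zero] at hab
      exact v₁.zero_iff.1 (hab.antisymm zero_le)
    simpa [c.eq_zero_of_fst ha ha0, c.eq_zero_of_fst hb hb0] using c.zero_mem
  have hres : (a + b) * a⁻¹ ∈ c.res := by
    rw [add_mul, c.mul_inv_cancel ha ha0]
    refine c.res.add_mem c.res.one_mem (c.mem_res_of_mem_lead (c.mul_mem hb (c.inv_mem ha)) ?_)
    rw [Prod.fst_mul, Prod.fst_inv, map_mul, map_inv₀, ← div_eq_mul_inv]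
    exact div_le_one_of_le₀ hab zero_le
  have heq : v₁ (a + b).1 = v₁ a.1 :=
    ((v₁.map_add a.1 b.1).trans (max_le le_rfl hab)).antisymm hle_a
  have hquot : (a + b) * a⁻¹ ∈ c.lead := c.mem_lead_of_mem_res hres (by
    rw [Prod.fst_mul, Prod.fst_inv, map_mul, map_inv₀, heq,
      mul_inv_cancel₀ (v₁.ne_zero_iff.2 ha0)])
  simpa [mul_assoc, mul_comm a⁻¹, c.mul_inv_cancel ha ha0] using c.mul_mem hquot ha

lemma mem_of_snd_sub_lt {a : K₁ × K₂} (ha : a ∈ c.lead) {y : K₂} (h : v₂ (y - a.2) < v₂ a.2) :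
    (a.1, y) ∈ c.lead := by
  have ha0 : a.2 ≠ 0 := by
    rintro ha0
    simp [ha0] at h
  have hsmall : v₂ ((y - a.2) / a.2) < 1 := by
    rw [map_div₀]
    exact (div_lt_one₀ (zero_lt_iff.2 (v₂.ne_zero_iff.2 ha0))).2 h
  convert! c.mul_mem ha (c.one_add_mem (a := (0, (y - a.2) / a.2)) (by simp) hsmall) using 1
  refine Prod.ext (by simp) ?_
  simp only [Prod.snd_mul, Prod.snd_add, Prod.snd_one]
  field_simp
  ring

/-! ### Polynomials over a partial isomorphism -/

/-- The polynomial `q` is expanded around `a` at the point `z` and divided by its dominant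
term `l`, so that the coefficients have matching residues which do not all vanish. -/
structure IsNormalized (q : (K₁ × K₂)[X]) (a z l : K₁ × K₂) : Prop where
  lead_mem : l ∈ c.lead
  lead_ne_zero : l.1 ≠ 0
  sub_mem : z - a ∈ c.lead
  sub_ne_zero : z.1 - a.1 ≠ 0
  coeff_mem_res : ∀ i, (rescale l⁻¹ a (z - a) q).coeff i ∈ c.res
  exists_coeff_eq_one : ∃ i, v₁ ((rescale l⁻¹ a (z - a) q).coeff i).1 = 1

variable {c}

lemma exists_isNormalized {G : Subring (K₁ × K₂)} (hG : (G : Set (K₁ × K₂)) ⊆ c.lead)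
    {a z : K₁ × K₂} (ha : a ∈ G) (hz : z - a ∈ c.lead) (hza : a.1 ≠ z.1)
    {q : (K₁ × K₂)[X]} (hq : ∀ i, q.coeff i ∈ G) (hq0 : q.map (RingHom.fst K₁ K₂) ≠ 0) :
    ∃ l, c.IsNormalized q a z l := by
  have hd : z.1 - a.1 ≠ 0 := sub_ne_zero.2 hza.symm
  set term : ℕ → K₁ × K₂ := fun i ↦ (taylor a q).coeff i * (z - a) ^ i
  have hfst (i : ℕ) : (term i).1 =
      (taylor a.1 (q.map (RingHom.fst K₁ K₂))).coeff i * (z.1 - a.1) ^ i := by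
    rw [← RingHom.coe_fst, ← map_taylor, coeff_map]
    rfl
  have hmem (i : ℕ) : term i ∈ c.lead :=
    c.mul_mem (hG (taylor_coeff_mem hq ha i)) (c.pow_mem hz i)
  obtain ⟨m, hm0, hmax⟩ := exists_dominant_term v₁ ((taylor_eq_zero a.1 _).not.2 hq0) hd
  simp only [← hfst] at hm0 hmax
  have hcoeff (i : ℕ) : (rescale (term m)⁻¹ a (z - a) q).coeff i = (term m)⁻¹ * term i :=
    rescale_coeff _ _ _ _ _
  refine ⟨term m, hmem m, hm0, hz, hd, fun i ↦ ?_, m, ?_⟩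
  · rw [hcoeff]
    refine c.mem_res_of_mem_lead (c.mul_mem (c.inv_mem (hmem m)) (hmem i)) ?_
    rw [Prod.fst_mul, Prod.fst_inv, map_mul, map_inv₀, mul_comm, ← div_eq_mul_inv]
    exact div_le_one_of_le₀ (hmax i) zero_le
  · rw [hcoeff, Prod.fst_mul, Prod.fst_inv, inv_mul_cancel₀ hm0, v₁.map_one]

namespace IsNormalized
variable {q : (K₁ × K₂)[X]} {a z l : K₁ × K₂} (h : c.IsNormalized q a z l)
include h

lemma taylor_coeff_mem_res (i : ℕ) : (taylor 1 (rescale l⁻¹ a (z - a) q)).coeff i ∈ c.res :=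
  taylor_coeff_mem h.coeff_mem_res c.res.one_mem i

lemma exists_closer_root (hv₁ : IsHenselianValuation v₁) (hchar : ResidueCharZero v₁)
    (hsmall : v₁ (l⁻¹ * q.eval z).1 < 1) :
    ∃ j, ∃ β ∈ hasseDerivRoots j (q.map (RingHom.fst K₁ K₂)), v₁ (z.1 - β) < v₁ (z.1 - a.1) ∧
      v₁ ((taylor 1 (rescale l⁻¹ a (z - a) q)).coeff (j + 1)).1 = 1 := by
  have hmap : (rescale l⁻¹ a (z - a) q).map (RingHom.fst K₁ K₂) =
      rescale l.1⁻¹ a.1 (z.1 - a.1) (q.map (RingHom.fst K₁ K₂)) := map_rescale _ _ _ _ _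
  have hcoeff (i : ℕ) : (rescale l.1⁻¹ a.1 (z.1 - a.1) (q.map (RingHom.fst K₁ K₂))).coeff i =
      ((rescale l⁻¹ a (z - a) q).coeff i).1 := by
    rw [← hmap, coeff_map, RingHom.coe_fst]
  have htaylor (i : ℕ) :
      (taylor 1 (rescale l.1⁻¹ a.1 (z.1 - a.1) (q.map (RingHom.fst K₁ K₂)))).coeff i =
        ((taylor 1 (rescale l⁻¹ a (z - a) q)).coeff i).1 := by
    rw [← hmap, ← map_one (RingHom.fst K₁ K₂), ← map_taylor, coeff_map, RingHom.coe_fst]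
  obtain ⟨j, β, hj, hroot, hlt, hunit⟩ := hv₁.exists_closer_root hchar h.sub_ne_zero
    (fun i ↦ by rw [hcoeff]; exact (c.le_one_of_mem_res (h.coeff_mem_res i)).1)
    (by simpa only [hcoeff] using h.exists_coeff_eq_one)
    (by rwa [← taylor_coeff_zero, htaylor, taylor_one_rescale_coeff_zero])
  rw [add_sub_cancel] at hlt
  exact ⟨j, β, mem_hasseDerivRoots.2 ⟨j, le_rfl, hj, hroot⟩, hlt, htaylor (j + 1) ▸ hunit⟩

lemma eval_mem_lead (hunit : v₁ (l⁻¹ * q.eval z).1 = 1) : q.eval z ∈ c.lead := by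
  have hres : l⁻¹ * q.eval z ∈ c.res :=
    taylor_one_rescale_coeff_zero l⁻¹ a z q ▸ h.taylor_coeff_mem_res 0
  have hmul := c.mul_mem h.lead_mem (c.mem_lead_of_mem_res hres hunit)
  rwa [← mul_assoc, c.mul_inv_cancel h.lead_mem h.lead_ne_zero, one_mul] at hmul

lemma exists_root_snd (hv₂ : IsHenselianValuation v₂) (hroot : (q.eval z).1 = 0)
    (hunit : v₁ ((taylor 1 (rescale l⁻¹ a (z - a) q)).coeff 1).1 = 1) :
    ∃ y, (q.map (RingHom.snd K₁ K₂)).eval y = 0 ∧ v₂ (y - z.2) < v₂ (z.2 - a.2) := by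
  have hmap : (taylor 1 (rescale l⁻¹ a (z - a) q)).map (RingHom.snd K₁ K₂) =
      taylor 1 (rescale l.2⁻¹ a.2 (z.2 - a.2) (q.map (RingHom.snd K₁ K₂))) := by
    rw [map_taylor, map_rescale, map_one]
    rfl
  have hzero : v₁ ((taylor 1 (rescale l⁻¹ a (z - a) q)).coeff 0).1 < 1 := by
    rw [taylor_one_rescale_coeff_zero, Prod.fst_mul, hroot, mul_zero, map_zero]
    exact zero_lt_one
  obtain ⟨w, hw, hw0⟩ := hv₂ ((taylor 1 (rescale l⁻¹ a (z - a) q)).map (RingHom.snd K₁ K₂))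
    (fun i ↦ by rw [coeff_map]; exact (c.le_one_of_mem_res (h.taylor_coeff_mem_res i)).2)
    (by rw [coeff_map]; exact (c.lt_one_iff_of_mem_res (h.taylor_coeff_mem_res 0)).1 hzero)
    (by rw [coeff_map]; exact c.snd_eq_one (h.taylor_coeff_mem_res 1) hunit)
  rw [hmap, taylor_eval, rescale_eval] at hw0
  refine ⟨_, (mul_eq_zero.1 hw0).resolve_left
    (inv_ne_zero (c.snd_ne_zero h.lead_mem h.lead_ne_zero)), ?_⟩
  have hd : z.2 - a.2 ≠ 0 := c.snd_ne_zero h.sub_mem h.sub_ne_zero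
  rw [show a.2 + (z.2 - a.2) * (w + 1) - z.2 = (z.2 - a.2) * w by ring, map_mul]
  exact mul_lt_of_lt_one_right (zero_lt_iff.2 (v₂.ne_zero_iff.2 hd)) hw

end IsNormalized

lemma exists_closest (v₁ : Valuation K₁ Γ₁) {G : Subring (K₁ × K₂)} (x : K₁) {a₀ : K₁ × K₂}
    (ha₀ : a₀ ∈ G) (s : Finset K₁) (hs : ∀ β ∈ s, ∃ b ∈ G, b.1 = β) :
    ∃ a ∈ G, v₁ (x - a.1) ≤ v₁ (x - a₀.1) ∧ ∀ β ∈ s, v₁ (x - a.1) ≤ v₁ (x - β) := by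
  classical
  obtain ⟨β, hβ, hmin⟩ := Finset.exists_min_image (insert a₀.1 s) (fun β ↦ v₁ (x - β))
    (Finset.insert_nonempty _ _)
  obtain ⟨a, ha, rfl⟩ : ∃ a ∈ G, a.1 = β := by
    rcases Finset.mem_insert.1 hβ with rfl | hβ
    exacts [⟨a₀, ha₀, rfl⟩, hs β hβ]
  exact ⟨a, ha, hmin _ (Finset.mem_insert_self _ _),
    fun β hβ ↦ hmin _ (Finset.mem_insert_of_mem hβ)⟩

/-- The leading terms of `z` relative to the centres in `G` determine those of the values at `z`
of the polynomials `q` over `G`, as there is no cancellation when `q` is expanded around the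
closest root of one of its Hasse derivatives. -/
lemma eval_mem_lead (hv₁ : IsHenselianValuation v₁) (hchar : ResidueCharZero v₁)
    {G : Subring (K₁ × K₂)} (hG : (G : Set (K₁ × K₂)) ⊆ c.lead) {z : K₁ × K₂}
    (hz : ∀ a ∈ G, z - a ∈ c.lead) (hzG : ∀ a ∈ G, a.1 ≠ z.1) {q : (K₁ × K₂)[X]}
    (hq : ∀ i, q.coeff i ∈ G)
    (hroots : ∀ β ∈ hasseDerivRoots 0 (q.map (RingHom.fst K₁ K₂)), ∃ b ∈ G, b.1 = β) :
    q.eval z ∈ c.lead := by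
  by_cases hq0 : q.map (RingHom.fst K₁ K₂) = 0
  · have hzero : q = 0 := by
      ext1 i
      exact c.eq_zero_of_fst (hG (hq i)) (by simpa using! congrArg (coeff · i) hq0)
    simpa [hzero] using c.zero_mem
  obtain ⟨a, ha, -, hmin⟩ := exists_closest v₁ z.1 G.zero_mem _ hroots
  obtain ⟨l, hl⟩ := exists_isNormalized hG ha (hz a ha) (hzG a ha) hq hq0
  refine hl.eval_mem_lead ?_
  have hle : v₁ (l⁻¹ * q.eval z).1 ≤ 1 :=
    (c.le_one_of_mem_res (taylor_one_rescale_coeff_zero l⁻¹ a z q ▸ hl.taylor_coeff_mem_res 0)).1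
  refine hle.eq_of_not_lt fun hlt ↦ ?_
  obtain ⟨j, β, hβ, hcloser, -⟩ := hl.exists_closer_root hv₁ hchar hlt
  obtain ⟨i, -, hroot⟩ := mem_hasseDerivRoots.1 hβ
  exact (hmin β (mem_hasseDerivRoots.2 ⟨i, zero_le, hroot⟩)).not_gt hcloser

lemma exists_root_near (hv₁ : IsHenselianValuation v₁) (hchar : ResidueCharZero v₁)
    (hv₂ : IsHenselianValuation v₂) {G : Subring (K₁ × K₂)} (hG : (G : Set (K₁ × K₂)) ⊆ c.lead)
    {z : K₁ × K₂} (hz : ∀ a ∈ G, z - a ∈ c.lead) (hzG : ∀ a ∈ G, a.1 ≠ z.1) {q : (K₁ × K₂)[X]}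
    (hq : ∀ i, q.coeff i ∈ G) (hq0 : q.map (RingHom.fst K₁ K₂) ≠ 0) (hroot : (q.eval z).1 = 0)
    (hroots : ∀ β ∈ hasseDerivRoots 1 (q.map (RingHom.fst K₁ K₂)), ∃ b ∈ G, b.1 = β)
    {a₀ : K₁ × K₂} (ha₀ : a₀ ∈ G) :
    ∃ y, (q.map (RingHom.snd K₁ K₂)).eval y = 0 ∧ v₂ (y - z.2) < v₂ (z.2 - a₀.2) := by
  obtain ⟨a, ha, hle, hmin⟩ := exists_closest v₁ z.1 ha₀ _ hroots
  obtain ⟨l, hl⟩ := exists_isNormalized hG ha (hz a ha) (hzG a ha) hq hq0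
  obtain ⟨j, β, hβ, hcloser, hunit⟩ := hl.exists_closer_root hv₁ hchar (by simp [hroot])
  obtain rfl : j = 0 := by
    by_contra hj
    obtain ⟨i, hji, hβi⟩ := mem_hasseDerivRoots.1 hβ
    exact (hmin β (mem_hasseDerivRoots.2 ⟨i, by lia, hβi⟩)).not_gt hcloser
  obtain ⟨y, hy, hlt⟩ := hl.exists_root_snd hv₂ hroot hunit
  refine ⟨y, hy, hlt.trans_le ?_⟩
  exact (c.valuation_le_iff (hz a ha) (hz a₀ ha₀) (sub_ne_zero.2 (hzG a₀ ha₀).symm)).1 hle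

/-- As `q` has only finitely many roots, one of them is close enough for all centres in `G`. -/
lemma exists_root_match (hv₁ : IsHenselianValuation v₁) (hchar : ResidueCharZero v₁)
    (hv₂ : IsHenselianValuation v₂) {G : Subring (K₁ × K₂)} (hG : (G : Set (K₁ × K₂)) ⊆ c.lead)
    {z : K₁ × K₂} (hz : ∀ a ∈ G, z - a ∈ c.lead) (hzG : ∀ a ∈ G, a.1 ≠ z.1) {q : (K₁ × K₂)[X]}
    (hq : ∀ i, q.coeff i ∈ G) (hq0 : q.map (RingHom.fst K₁ K₂) ≠ 0) (hroot : (q.eval z).1 = 0)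
    (hroots : ∀ β ∈ hasseDerivRoots 1 (q.map (RingHom.fst K₁ K₂)), ∃ b ∈ G, b.1 = β) :
    ∃ y, (q.map (RingHom.snd K₁ K₂)).eval y = 0 ∧ ∀ a ∈ G, (z.1, y) - a ∈ c.lead := by
  have hsnd : q.map (RingHom.snd K₁ K₂) ≠ 0 := by
    refine mt (fun hzero ↦ ?_) hq0
    ext i
    simpa using! (c.eq_zero_iff (hG (hq i))).2 (by simpa using! congrArg (coeff · i) hzero)
  obtain ⟨y, hy, hclose⟩ : ∃ y, (q.map (RingHom.snd K₁ K₂)).eval y = 0 ∧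
      ∀ a ∈ G, v₂ (y - z.2) < v₂ (z.2 - a.2) := by
    obtain ⟨y₀, hy₀, -⟩ := exists_root_near hv₁ hchar hv₂ hG hz hzG hq hq0 hroot hroots G.zero_mem
    classical
    obtain ⟨y, hy, hmin⟩ := (q.map (RingHom.snd K₁ K₂)).roots.toFinset.exists_min_image
      (fun y ↦ v₂ (y - z.2)) ⟨y₀, by simpa [hsnd] using hy₀⟩
    simp only [Multiset.mem_toFinset, mem_roots hsnd, IsRoot.def] at hy hmin
    refine ⟨y, hy, fun a ha ↦ ?_⟩
    obtain ⟨y', hy', hlt⟩ := exists_root_near hv₁ hchar hv₂ hG hz hzG hq hq0 hroot hroots ha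
    exact (hmin y' hy').trans_lt hlt
  refine ⟨y, hy, fun a ha ↦ c.mem_of_snd_sub_lt (hz a ha) ?_⟩
  simpa using hclose a ha

variable (c) in
/-- Countably many conditions on the leading terms of `y - a` can be satisfied together as soon
as any finitely many of them can. -/
def IsSaturated : Prop :=
  ∀ (x : K₁) (s : Set (K₁ × K₂)), s.Countable → (∀ a ∈ s, a.1 ≠ x) →
    (∀ F : Finset (K₁ × K₂), ↑F ⊆ s → ∃ y, ∀ a ∈ F, (x, y) - a ∈ c.lead) →
    ∃ y, ∀ a ∈ s, (x, y) - a ∈ c.lead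

/-- A match of leading terms relative to the centre `a` closest to `x` is a match relative to any
other centre `b`, since `(x - a) + (a - b)` has no cancellation. -/
lemma IsSaturated.exists_match (hsat : c.IsSaturated) {G : Subring (K₁ × K₂)}
    (hG : (G : Set (K₁ × K₂)) ⊆ c.lead) (hcount : (G : Set (K₁ × K₂)).Countable) {x : K₁}
    (hx : ∀ a ∈ G, a.1 ≠ x) (hlift : ∀ a ∈ G, ∃ y, (x - a.1, y) ∈ c.lead) :
    ∃ y, ∀ a ∈ G, (x, y) - a ∈ c.lead := by
  refine hsat x G hcount hx fun F hF ↦ ?_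
  rcases F.eq_empty_or_nonempty with rfl | hne
  · exact ⟨0, by simp⟩
  obtain ⟨a, haF, hmin⟩ := F.exists_min_image (fun a ↦ v₁ (x - a.1)) hne
  obtain ⟨y, hy⟩ := hlift a (hF haF)
  refine ⟨y + a.2, fun b hb ↦ ?_⟩
  have hsum : (x, y + a.2) - b = (x - a.1, y) + (a - b) :=
    Prod.ext (by simp) (by simp [add_sub_assoc])
  have hfst : ((x - a.1, y) + (a - b)).1 = x - b.1 := by simp
  rw [hsum]
  refine c.add_mem hy (hG (G.sub_mem (hF haF) (hF hb))) (hfst ▸ hmin b hb) ?_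
  rw [hfst, Prod.fst_sub, ← sub_sub_sub_cancel_left b.1 a.1 x]
  exact (v₁.map_sub _ _).trans (max_le le_rfl (hmin b hb))

end LeadCorr
end LeadCorr

/-! ### Extension of partial isomorphisms -/

section PartialIso
open Polynomial

variable {K₁ K₂ Γ₁ Γ₂ : Type*} [Field K₁] [Field K₂]
  [LinearOrderedCommGroupWithZero Γ₁] [LinearOrderedCommGroupWithZero Γ₂]
  {v₁ : Valuation K₁ Γ₁} {v₂ : Valuation K₂ Γ₂} {c : LeadCorr v₁ v₂}

lemma fst_eval (q : (K₁ × K₂)[X]) (z : K₁ × K₂) :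
    (q.eval z).1 = (q.map (RingHom.fst K₁ K₂)).eval z.1 :=
  (eval_map_apply (RingHom.fst K₁ K₂) z).symm

lemma snd_eval (q : (K₁ × K₂)[X]) (z : K₁ × K₂) :
    (q.eval z).2 = (q.map (RingHom.snd K₁ K₂)).eval z.2 :=
  (eval_map_apply (RingHom.snd K₁ K₂) z).symm

/-- All roots of the first components of nonzero polynomials over `G` of degree less than `d` are
first components of elements of `G`. -/
def RootClosed (G : Subring (K₁ × K₂)) (d : ℕ) : Prop :=
  ∀ h : G[X], h ≠ 0 → h.natDegree < d → ∀ x,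
    ((h.map G.subtype).map (RingHom.fst K₁ K₂)).eval x = 0 → ∃ a ∈ G, a.1 = x

lemma RootClosed.exists_of_mem_hasseDerivRoots {G : Subring (K₁ × K₂)} {d m : ℕ}
    (hG : RootClosed G d) {h : G[X]} (hd : h.natDegree < d + m) :
    ∀ β ∈ hasseDerivRoots m ((h.map G.subtype).map (RingHom.fst K₁ K₂)), ∃ a ∈ G, a.1 = β := by
  intro β hβ
  obtain ⟨j, hmj, hj0, hroot⟩ := mem_hasseDerivRoots.1 hβ
  simp only [← map_hasseDeriv] at hj0 hroot
  have hne : hasseDeriv j h ≠ 0 := by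
    rintro hzero
    simp [hzero] at hj0
  have hjh : j ≤ h.natDegree := by
    by_contra! hlt
    exact hne (hasseDeriv_eq_zero_of_lt_natDegree h j hlt)
  exact hG _ hne ((natDegree_hasseDeriv_le h j).trans_lt (by lia)) β hroot

namespace LeadCorr

/-- `G` is the graph of an isomorphism from a subring of `B` to a subring of `K₂` which respects
leading terms. -/
structure IsPartialIso (c : LeadCorr v₁ v₂) (B : Subfield K₁) (G : Subring (K₁ × K₂)) : Prop where
  subset_lead : (G : Set (K₁ × K₂)) ⊆ c.lead
  fst_mem : ∀ a ∈ G, a.1 ∈ B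

namespace IsPartialIso
variable {B : Subfield K₁} {G : Subring (K₁ × K₂)}

lemma injOn_fst (hG : c.IsPartialIso B G) : Set.InjOn Prod.fst (G : Set (K₁ × K₂)) := by
  intro a ha b hb hab
  refine Prod.ext hab (sub_eq_zero.1 ?_)
  exact (c.eq_zero_iff (hG.subset_lead (G.sub_mem ha hb))).1 (sub_eq_zero.2 hab)

lemma countable (hG : c.IsPartialIso B G) (hB : (B : Set K₁).Countable) :
    (G : Set (K₁ × K₂)).Countable :=
  Set.MapsTo.countable_of_injOn hG.fst_mem hG.injOn_fst hB

lemma exists_maximal_ge (hG : c.IsPartialIso B G) : ∃ H, G ≤ H ∧ Maximal (c.IsPartialIso B) H := by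
  refine zorn_le_nonempty₀ {H | c.IsPartialIso B H} (fun C hC hchain H hH ↦ ?_) G hG
  have hmem {a : K₁ × K₂} : a ∈ sSup C ↔ ∃ H ∈ C, a ∈ H :=
    Subring.mem_sSup_of_directedOn ⟨H, hH⟩ hchain.directedOn
  refine ⟨sSup C, ⟨fun a ha ↦ ?_, fun a ha ↦ ?_⟩, fun _ ↦ le_sSup⟩
  · obtain ⟨H, hHC, haH⟩ := hmem.1 ha
    exact (hC hHC).subset_lead haH
  · obtain ⟨H, hHC, haH⟩ := hmem.1 ha
    exact (hC hHC).fst_mem a haH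

/-- The partial isomorphism induced on fractions. -/
def fracSubring (hG : c.IsPartialIso B G) : Subring (K₁ × K₂) where
  carrier := {r | ∃ a ∈ G, ∃ b ∈ G, b.1 ≠ 0 ∧ r = a * b⁻¹}
  mul_mem' := by
    rintro _ _ ⟨a, ha, b, hb, hb0, rfl⟩ ⟨a', ha', b', hb', hb0', rfl⟩
    exact ⟨a * a', G.mul_mem ha ha', b * b', G.mul_mem hb hb', mul_ne_zero hb0 hb0', by
      rw [mul_inv, mul_mul_mul_comm]⟩
  one_mem' := ⟨1, G.one_mem, 1, G.one_mem, by simp, by simp⟩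
  add_mem' := by
    rintro _ _ ⟨a, ha, b, hb, hb0, rfl⟩ ⟨a', ha', b', hb', hb0', rfl⟩
    refine ⟨a * b' + a' * b, G.add_mem (G.mul_mem ha hb') (G.mul_mem ha' hb), b * b',
      G.mul_mem hb hb', mul_ne_zero hb0 hb0', ?_⟩
    linear_combination
      (-(a * b⁻¹)) * c.mul_inv_cancel (hG.subset_lead hb') hb0' -
        a' * b'⁻¹ * c.mul_inv_cancel (hG.subset_lead hb) hb0 +
        (a * b' + a' * b) * (mul_inv b b').symm
  zero_mem' := ⟨0, G.zero_mem, 1, G.one_mem, by simp, by simp⟩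
  neg_mem' := by
    rintro _ ⟨a, ha, b, hb, hb0, rfl⟩
    exact ⟨-a, G.neg_mem ha, b, hb, hb0, by rw [neg_mul]⟩

lemma le_fracSubring (hG : c.IsPartialIso B G) : G ≤ hG.fracSubring :=
  fun a ha ↦ ⟨a, ha, 1, G.one_mem, by simp, by simp⟩

lemma isPartialIso_fracSubring (hG : c.IsPartialIso B G) : c.IsPartialIso B hG.fracSubring where
  subset_lead := by
    rintro _ ⟨a, ha, b, hb, -, rfl⟩
    exact c.mul_mem (hG.subset_lead ha) (c.inv_mem (hG.subset_lead hb))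
  fst_mem := by
    rintro _ ⟨a, ha, b, hb, -, rfl⟩
    exact B.mul_mem (hG.fst_mem a ha) (B.inv_mem (hG.fst_mem b hb))

lemma inv_mem_of_maximal (hG : Maximal (c.IsPartialIso B) G) {a : K₁ × K₂} (ha : a ∈ G)
    (ha0 : a.1 ≠ 0) : a⁻¹ ∈ G :=
  hG.le_of_ge hG.prop.isPartialIso_fracSubring hG.prop.le_fracSubring
    ⟨1, G.one_mem, a, ha, ha0, (one_mul _).symm⟩

lemma mem_of_maximal (hG : Maximal (c.IsPartialIso B) G) {z : K₁ × K₂} (hzB : z.1 ∈ B)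
    (hz : ∀ h : G[X], (h.map G.subtype).eval z ∈ c.lead) : z ∈ G := by
  have hiso : c.IsPartialIso B (eval₂RingHom G.subtype z).range := by
    constructor
    · rintro _ ⟨h, rfl⟩
      simpa only [coe_eval₂RingHom, eval_map] using hz h
    · rintro _ ⟨h, rfl⟩
      rw [coe_eval₂RingHom, ← eval_map, fst_eval]
      refine eval_mem_of_coeff_mem (N := B.toSubring) (fun i ↦ ?_) hzB
      rw [coeff_map, coeff_map]
      exact hG.prop.fst_mem _ (h.coeff i).2
  exact hG.le_of_ge hiso (fun a ha ↦ ⟨C ⟨a, ha⟩, by simp⟩) ⟨X, by simp⟩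

lemma exists_monic_of_maximal (hG : Maximal (c.IsPartialIso B) G) {h : G[X]} (hh : h ≠ 0) :
    ∃ u : G, (h * C u).Monic := by
  have hlead : (h.leadingCoeff : K₁ × K₂).1 ≠ 0 := fun hzero ↦
    leadingCoeff_ne_zero.2 hh <| Subtype.ext <|
      c.eq_zero_of_fst (hG.prop.subset_lead h.leadingCoeff.2) hzero
  exact ⟨⟨_, inv_mem_of_maximal hG h.leadingCoeff.2 hlead⟩,
    monic_mul_C_of_leadingCoeff_mul_eq_one <| Subtype.ext <|
      c.mul_inv_cancel (hG.prop.subset_lead h.leadingCoeff.2) hlead⟩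

lemma isIntegral_of_monic (hG : c.IsPartialIso B G) {P : G[X]} (hP : P.Monic) {x : K₁}
    (hx : ((P.map G.subtype).map (RingHom.fst K₁ K₂)).eval x = 0) : IsIntegral B x := by
  let f : G →+* B := ((RingHom.fst K₁ K₂).comp G.subtype).codRestrict B fun a ↦ hG.fst_mem a a.2
  refine ⟨P.map f, hP.map f, ?_⟩
  rw [eval₂_map]
  rwa [Polynomial.map_map, eval_map] at hx

/-- A root `x` of least degree over `G` is matched with a root `y`, and reduction modulo the monic
polynomial `P` shows that `(x, y)` generates a partial isomorphism over `G`. -/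
lemma exists_mem_of_monic_root (hG : Maximal (c.IsPartialIso B) G)
    (hv₁ : IsHenselianValuation v₁) (hchar : ResidueCharZero v₁) (hv₂ : IsHenselianValuation v₂)
    (hmatch : ∀ x ∈ B, (∀ a ∈ G, a.1 ≠ x) → ∃ y, ∀ a ∈ G, (x, y) - a ∈ c.lead)
    {P : G[X]} (hP : P.Monic) (hclosed : RootClosed G P.natDegree) {x : K₁} (hxB : x ∈ B)
    (hx : ((P.map G.subtype).map (RingHom.fst K₁ K₂)).eval x = 0) : ∃ a ∈ G, a.1 = x := by
  by_contra! hxG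
  obtain ⟨y₀, hy₀⟩ := hmatch x hxB hxG
  obtain ⟨y, hy, hyG⟩ := exists_root_match hv₁ hchar hv₂ hG.prop.subset_lead hy₀ hxG
    (q := P.map G.subtype) (fun i ↦ by rw [coeff_map]; exact (P.coeff i).2)
    ((hP.map _).map _).ne_zero (by rw [fst_eval, hx])
    (hclosed.exists_of_mem_hasseDerivRoots P.natDegree.lt_succ_self)
  have hroot : (P.map G.subtype).eval (x, y) = 0 :=
    Prod.ext (by rw [fst_eval, hx]; rfl) (by rw [snd_eval, hy]; rfl)
  have hP1 : P ≠ 1 := by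
    rintro rfl
    simp at hx
  refine hxG (x, y) (mem_of_maximal hG hxB fun h ↦ ?_) rfl
  rw [← modByMonic_add_div h P, Polynomial.map_add, Polynomial.map_mul, eval_add, eval_mul,
    hroot, zero_mul, add_zero]
  exact eval_mem_lead hv₁ hchar hG.prop.subset_lead hyG hxG
    (fun i ↦ by rw [coeff_map]; exact Subtype.prop _)
    (hclosed.exists_of_mem_hasseDerivRoots (natDegree_modByMonic_lt h hP hP1))

lemma rootClosed_of_maximal (hG : Maximal (c.IsPartialIso B) G)
    (hv₁ : IsHenselianValuation v₁) (hchar : ResidueCharZero v₁) (hv₂ : IsHenselianValuation v₂)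
    (hBalg : ∀ x : K₁, IsAlgebraic B x → x ∈ B)
    (hmatch : ∀ x ∈ B, (∀ a ∈ G, a.1 ≠ x) → ∃ y, ∀ a ∈ G, (x, y) - a ∈ c.lead) (d : ℕ) :
    RootClosed G d := by
  induction d with
  | zero => exact fun _ _ hd ↦ absurd hd (Nat.not_lt_zero _)
  | succ d ih =>
    intro h hh hd x hx
    obtain ⟨u, hu⟩ := exists_monic_of_maximal hG hh
    have hroot : (((h * C u).map G.subtype).map (RingHom.fst K₁ K₂)).eval x = 0 := by
      rw [Polynomial.map_mul, Polynomial.map_mul, eval_mul, hx, zero_mul]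
    have hdeg : (h * C u).natDegree ≤ d := (natDegree_mul_C_le h u).trans (Nat.lt_succ_iff.1 hd)
    exact exists_mem_of_monic_root hG hv₁ hchar hv₂ hmatch hu
      (fun h' hh' hlt ↦ ih h' hh' (hlt.trans_le hdeg))
      (hBalg x (hG.prop.isIntegral_of_monic hu hroot).isAlgebraic) hroot

theorem exists_extension (hG : c.IsPartialIso B G) (hv₁ : IsHenselianValuation v₁)
    (hchar : ResidueCharZero v₁) (hv₂ : IsHenselianValuation v₂) (hsat : c.IsSaturated)
    (hB : (B : Set K₁).Countable) (hBalg : ∀ x : K₁, IsAlgebraic B x → x ∈ B)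
    (hlift : ∀ x ∈ B, ∃ y, (x, y) ∈ c.lead) :
    ∃ H, G ≤ H ∧ c.IsPartialIso B H ∧ ∀ x ∈ B, ∃ y, (x, y) ∈ H := by
  obtain ⟨H, hGH, hH⟩ := hG.exists_maximal_ge
  have hmatch : ∀ x ∈ B, (∀ a ∈ H, a.1 ≠ x) → ∃ y, ∀ a ∈ H, (x, y) - a ∈ c.lead :=
    fun x hx hxH ↦ hsat.exists_match hH.prop.subset_lead (hH.prop.countable hB) hxH
      fun a ha ↦ hlift _ (B.sub_mem hx (hH.prop.fst_mem a ha))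
  refine ⟨H, hGH, hH.prop, fun x hx ↦ ?_⟩
  by_contra! hxH
  have hne : ∀ a ∈ H, a.1 ≠ x := by
    rintro a ha rfl
    exact hxH a.2 ha
  obtain ⟨y, hy⟩ := hmatch x hx hne
  refine hxH y (mem_of_maximal hH hx fun h ↦ ?_)
  exact eval_mem_lead hv₁ hchar hH.prop.subset_lead hy hne
    (fun i ↦ by rw [coeff_map]; exact (h.coeff i).2)
    ((rootClosed_of_maximal hH hv₁ hchar hv₂ hBalg hmatch
      (h.natDegree + 1)).exists_of_mem_hasseDerivRoots (by lia))

end IsPartialIso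
end LeadCorr
end PartialIso

/-! ### Ultrapowers and Witt vectors over rings of sequences -/

section Ultrapower
open Filter

/-- The ultrapower of `X` along a fixed nonprincipal ultrafilter on `ℕ`. -/
abbrev Ultrapower (X : Type*) := Germ (hyperfilter ℕ : Filter ℕ) X

/-- The class of a sequence in the ultrapower. -/
def seqGerm (k : Type*) [CommRing k] : (ℕ → k) →+* Ultrapower k := Germ.coeRingHom _

/-- The diagonal embedding into the ultrapower. -/
def diag (k : Type*) [CommRing k] : k →+* Ultrapower k := (seqGerm k).comp (Pi.constRingHom ℕ k)

section Germ
variable {k : Type*} [CommRing k]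

lemma seqGerm_eq_iff {f g : ℕ → k} :
    seqGerm k f = seqGerm k g ↔ ∀ᶠ n in (hyperfilter ℕ : Filter ℕ), f n = g n := Germ.coe_eq

lemma seqGerm_eq_zero_iff {f : ℕ → k} :
    seqGerm k f = 0 ↔ ∀ᶠ n in (hyperfilter ℕ : Filter ℕ), f n = 0 :=
  map_zero (seqGerm k) ▸ seqGerm_eq_iff

lemma seqGerm_ne_zero_iff {f : ℕ → k} :
    seqGerm k f ≠ 0 ↔ ∀ᶠ n in (hyperfilter ℕ : Filter ℕ), f n ≠ 0 := by
  rw [Ne, seqGerm_eq_zero_iff, Ultrafilter.eventually_not]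

lemma seqGerm_surjective (k : Type*) [CommRing k] : Function.Surjective (seqGerm k) :=
  fun x ↦ Germ.inductionOn x fun f ↦ ⟨f, rfl⟩

end Germ

/-- Countable saturation: at coordinate `n` the `m` first conditions are satisfied for the largest
possible `m ≤ n`. -/
lemma exists_seq_of_finite {ι X : Type*} [Countable ι] (P : ι → ℕ → X → Prop)
    (h : ∀ F : Finset ι, ∀ᶠ n in (hyperfilter ℕ : Filter ℕ), ∃ x, ∀ i ∈ F, P i n x) :
    ∃ x : ℕ → X, ∀ i, ∀ᶠ n in (hyperfilter ℕ : Filter ℕ), P i n (x n) := by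
  classical
  obtain ⟨e, he⟩ := exists_injective_nat ι
  obtain ⟨-, x₀, -⟩ := (h ∅).exists
  let good (n m : ℕ) : Prop := ∃ x, ∀ i, e i < m → P i n x
  have hgood (m : ℕ) : ∀ᶠ n in (hyperfilter ℕ : Filter ℕ), good n m := by
    have hfin : {i | e i < m}.Finite := (Set.finite_Iio m).preimage he.injOn
    simpa [good] using h hfin.toFinset
  have hbest (n : ℕ) : ∃ x, good n (Nat.findGreatest (good n) n) →
      ∀ i, e i < Nat.findGreatest (good n) n → P i n x := by
    by_cases hn : good n (Nat.findGreatest (good n) n)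
    · exact ⟨hn.choose, fun _ ↦ hn.choose_spec⟩
    · exact ⟨x₀, fun hn' ↦ absurd hn' hn⟩
  choose x hx using hbest
  refine ⟨x, fun i ↦ ?_⟩
  filter_upwards [hgood (e i + 1), Nat.hyperfilter_le_atTop (eventually_ge_atTop (e i + 1))]
    with n hn hle
  exact hx n (Nat.findGreatest_spec hle hn) i (Nat.le_findGreatest hle hn)

end Ultrapower

section WittUltrapower
open Filter

variable {p : ℕ} [Fact p.Prime] {κ : Type*} [Field κ]

variable (p κ)

/-- The `n`-th term of a Witt vector over a ring of sequences. -/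
abbrev wittAt (n : ℕ) : WittVector p (ℕ → κ) →+* WittVector p κ :=
  WittVector.map (Pi.evalRingHom (fun _ ↦ κ) n)

/-- The coordinatewise reduction of a sequence of Witt vectors over `κ` to a Witt vector over the
ultrapower of `κ`. -/
def wittRed : WittVector p (ℕ → κ) →+* WittVector p (Ultrapower κ) := WittVector.map (seqGerm κ)

variable {p κ} in
lemma wittRed_coeff (u : WittVector p (ℕ → κ)) (i : ℕ) :
    (wittRed p κ u).coeff i = seqGerm κ (u.coeff i) := rfl

variable {p κ} in
lemma exists_forall_wittAt_eq (f : ℕ → WittVector p κ) : ∃ u, ∀ n, wittAt p κ n u = f n :=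
  ⟨WittVector.mk p fun i n ↦ (f n).coeff i, fun n ↦ by
    ext i
    simp [WittVector.map_coeff]⟩

/-- The ultrapower of the fraction field of `W(κ)`. -/
abbrev WittUltrapower := Ultrapower (FractionRing (WittVector p κ))

/-- A Witt vector over the ring of sequences in `κ`, viewed as a sequence of Witt vectors, has a
class in the ultrapower of the fraction field of `W(κ)`. -/
def wittGerm : WittVector p (ℕ → κ) →+* WittUltrapower p κ :=
  (seqGerm _).comp (RingHom.pi fun n ↦ (algebraMap _ _).comp (wittAt p κ n))

variable {p κ}

lemma wittGerm_apply (u : WittVector p (ℕ → κ)) :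
    wittGerm p κ u = seqGerm _ fun n ↦ algebraMap _ _ (wittAt p κ n u) := rfl

lemma wittGerm_eq_iff {u w : WittVector p (ℕ → κ)} : wittGerm p κ u = wittGerm p κ w ↔
    ∀ᶠ n in (hyperfilter ℕ : Filter ℕ), wittAt p κ n u = wittAt p κ n w := by
  simp only [wittGerm_apply, seqGerm_eq_iff,
    (IsFractionRing.injective (WittVector p κ) (FractionRing (WittVector p κ))).eq_iff]

lemma wittRed_eq_of_wittGerm_eq {u w : WittVector p (ℕ → κ)}
    (h : wittGerm p κ u = wittGerm p κ w) : wittRed p κ u = wittRed p κ w := by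
  ext i
  rw [wittRed_coeff, wittRed_coeff, seqGerm_eq_iff]
  filter_upwards [wittGerm_eq_iff.1 h] with n hn
  exact congrArg (WittVector.coeff · i) hn

lemma exists_wittGerm {f : ℕ → FractionRing (WittVector p κ)}
    (h : ∀ᶠ n in (hyperfilter ℕ : Filter ℕ), ∃ t : WittVector p κ, algebraMap _ _ t = f n) :
    ∃ u, wittGerm p κ u = seqGerm _ f := by
  obtain ⟨t, ht⟩ := h.choice
  obtain ⟨u, hu⟩ := exists_forall_wittAt_eq t
  refine ⟨u, ?_⟩
  rw [wittGerm_apply, seqGerm_eq_iff]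
  filter_upwards [ht] with n hn
  rw [hu n, hn]

/-- Only the behaviour on almost all coordinates matters, so vanishing reduced coefficients can be
replaced by zero. -/
lemma exists_wittGerm_eq_of_coeff_eq_zero {u : WittVector p (ℕ → κ)} {m : ℕ}
    (h : ∀ i < m, (wittRed p κ u).coeff i = 0) :
    ∃ w, wittGerm p κ u = wittGerm p κ w ∧ ∀ i < m, w.coeff i = 0 := by
  refine ⟨WittVector.mk p fun i ↦ if i < m then 0 else u.coeff i, ?_, fun i hi ↦ by simp [hi]⟩
  have hzero : ∀ᶠ n in (hyperfilter ℕ : Filter ℕ), ∀ i ∈ Finset.range m, u.coeff i n = 0 :=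
    (eventually_all_finset _).2 fun i hi ↦
      seqGerm_eq_zero_iff.1 (wittRed_coeff u i ▸ h i (Finset.mem_range.1 hi))
  rw [wittGerm_eq_iff]
  filter_upwards [hzero] with n hn
  ext i
  by_cases hi : i < m
  · simpa [hi, WittVector.map_coeff] using hn i (Finset.mem_range.2 hi)
  · simp [hi, WittVector.map_coeff]

variable [CharP κ p]

variable (p κ) in
/-- The class of the sequence of the powers `p ^ γ n`. -/
def pPow (γ : ℕ → ℤ) : WittUltrapower p κ :=
  seqGerm _ fun n ↦ (p : FractionRing (WittVector p κ)) ^ γ n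

lemma pPow_add (γ δ : ℕ → ℤ) : pPow p κ (γ + δ) = pPow p κ γ * pPow p κ δ := by
  rw [pPow, pPow, pPow, ← map_mul]
  exact congrArg _ (_root_.funext fun n ↦ zpow_add₀ (WittVector.FractionRing.p_nonzero p κ) _ _)

lemma pPow_zero : pPow p κ 0 = 1 := by
  rw [← map_one (seqGerm _)]
  exact congrArg _ (_root_.funext fun _ ↦ zpow_zero (p : FractionRing (WittVector p κ)))

lemma pPow_ne_zero (γ : ℕ → ℤ) : pPow p κ γ ≠ 0 := by
  refine left_ne_zero_of_mul_eq_one (b := pPow p κ (-γ)) ?_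
  rw [← pPow_add, add_neg_cancel, pPow_zero]

lemma pPow_neg (γ : ℕ → ℤ) : pPow p κ (-γ) = (pPow p κ γ)⁻¹ := by
  refine eq_inv_of_mul_eq_one_left ?_
  rw [← pPow_add, neg_add_cancel, pPow_zero]

lemma pPow_const (m : ℤ) : pPow p κ (fun _ ↦ m) = (p : WittUltrapower p κ) ^ m := by
  rw [← map_natCast (diag _), ← map_zpow₀]
  rfl

lemma pPow_congr {γ δ : ℕ → ℤ} (h : ∀ᶠ n in (hyperfilter ℕ : Filter ℕ), γ n = δ n) :
    pPow p κ γ = pPow p κ δ := by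
  rw [pPow, pPow, seqGerm_eq_iff]
  filter_upwards [h] with n hn
  rw [hn]

lemma natCast_p_ne_zero : (p : WittUltrapower p κ) ≠ 0 := by
  rw [← map_natCast (diag _)]
  exact (_root_.map_ne_zero _).2 (WittVector.FractionRing.p_nonzero p κ)

instance ultrapowerCharP : CharP (Ultrapower κ) p :=
  charP_of_injective_ringHom (diag κ).injective p

lemma wittGerm_mul_p_ne_one (u : WittVector p (ℕ → κ)) :
    wittGerm p κ u * (p : WittUltrapower p κ) ≠ 1 := by
  intro h
  have hgerm : wittGerm p κ (u * p) = wittGerm p κ 1 := by simp [h]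
  have hcoeff := congrArg (WittVector.coeff · 0) (wittRed_eq_of_wittGerm_eq hgerm)
  simp only [map_mul, map_natCast, WittVector.mul_charP_coeff_zero, map_one,
    WittVector.one_coeff_zero] at hcoeff
  exact zero_ne_one hcoeff

instance seqPerfectRing [PerfectRing κ p] : PerfectRing (ℕ → κ) p where
  bijective_frobenius := by
    refine ⟨fun f g h ↦ _root_.funext fun n ↦ injective_frobenius κ p (congrFun h n), fun f ↦ ?_⟩
    choose g hg using fun n ↦ surjective_frobenius κ p (f n)
    exact ⟨g, _root_.funext hg⟩

variable [PerfectRing κ p]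

lemma exists_wittGerm_eq_mul_pow {u : WittVector p (ℕ → κ)} {m : ℕ}
    {x : WittVector p (Ultrapower κ)} (h : wittRed p κ u = x * (p : WittVector p _) ^ m) :
    ∃ t, wittGerm p κ u = wittGerm p κ t * (p : WittUltrapower p κ) ^ m ∧ wittRed p κ t = x := by
  obtain ⟨w, huw, hw⟩ := exists_wittGerm_eq_of_coeff_eq_zero (u := u) (m := m) fun i hi ↦ by
    rw [h, WittVector.mul_pow_charP_coeff_zero _ hi]
  obtain ⟨t, rfl⟩ := Ideal.mem_span_singleton.1
    ((WittVector.mem_span_p_pow_iff_le_coeff_eq_zero w m).2 hw)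
  refine ⟨t, by rw [huw, map_mul, map_pow, map_natCast, mul_comm], ?_⟩
  refine mul_right_cancel₀ (pow_ne_zero m (WittVector.p_nonzero p (Ultrapower κ))) ?_
  rw [← h, wittRed_eq_of_wittGerm_eq huw, map_mul, map_pow, map_natCast, mul_comm]

lemma wittRed_eq_zero_iff {u : WittVector p (ℕ → κ)} : wittRed p κ u = 0 ↔
    ∀ m : ℕ, ∃ t, wittGerm p κ u = wittGerm p κ t * (p : WittUltrapower p κ) ^ m := by
  refine ⟨fun h m ↦ ?_, fun h ↦ ?_⟩
  · obtain ⟨t, ht, -⟩ := exists_wittGerm_eq_mul_pow (x := 0) (m := m) (by rw [h, zero_mul])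
    exact ⟨t, ht⟩
  · ext i
    obtain ⟨t, ht⟩ := h (i + 1)
    have hgerm : wittGerm p κ u = wittGerm p κ (t * (p : WittVector p (ℕ → κ)) ^ (i + 1)) := by
      simp [ht]
    rw [wittRed_eq_of_wittGerm_eq hgerm, map_mul, map_pow, map_natCast,
      WittVector.mul_pow_charP_coeff_zero _ (Nat.lt_succ_self i), WittVector.zero_coeff]

lemma exists_zpow_mul {x : FractionRing (WittVector p κ)} (hx : x ≠ 0) :
    ∃ (γ : ℤ) (t : WittVector p κ), t.coeff 0 ≠ 0 ∧
      x = (p : FractionRing (WittVector p κ)) ^ γ * algebraMap _ _ t := by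
  obtain ⟨γ, u, rfl⟩ := IsDiscreteValuationRing.exists_units_eq_smul_zpow_of_irreducible
    (WittVector.irreducible p (k := κ)) hx
  refine ⟨γ, u, (u.isUnit.map (WittVector.constantCoeff (p := p) (R := κ))).ne_zero, ?_⟩
  rw [map_natCast, Units.smul_def, Algebra.smul_def, mul_comm]

lemma exists_pPow_mul {x : WittUltrapower p κ} (hx : x ≠ 0) :
    ∃ (γ : ℕ → ℤ) (u : WittVector p (ℕ → κ)),
      (wittRed p κ u).coeff 0 ≠ 0 ∧ x = pPow p κ γ * wittGerm p κ u := by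
  obtain ⟨f, rfl⟩ := seqGerm_surjective _ x
  obtain ⟨γ, hγ⟩ := ((seqGerm_ne_zero_iff.1 hx).mono fun n ↦ exists_zpow_mul).choice
  obtain ⟨t, ht⟩ := hγ.choice
  obtain ⟨u, hu⟩ := exists_forall_wittAt_eq t
  refine ⟨γ, u, ?_, ?_⟩
  · rw [wittRed_coeff, seqGerm_ne_zero_iff]
    filter_upwards [ht] with n hn
    simpa [← hu n] using hn.1
  · rw [wittGerm_apply, pPow, ← map_mul, seqGerm_eq_iff]
    filter_upwards [ht] with n hn
    rw [Pi.mul_apply, hu n]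
    exact hn.2

end WittUltrapower

lemma exists_fixedPoint_of_adic_contraction {A : Type*} [CommRing A] {I : Ideal A}
    [IsAdicComplete I A] {f : A → A}
    (hf : ∀ (n : ℕ) (x y : A), x - y ∈ I ^ n → f x - f y ∈ I ^ (n + 1)) : ∃ s, f s = s := by
  have hsmod {n : ℕ} {x y : A} : x ≡ y [SMOD (I ^ n • ⊤ : Submodule A A)] ↔ x - y ∈ I ^ n := by
    rw [SModEq.sub_mem, smul_eq_mul, Ideal.mul_top]
  have hstep (n : ℕ) : f^[n] 0 - f^[n + 1] 0 ∈ I ^ n := by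
    induction n with
    | zero => simp
    | succ n ih =>
      rw [Function.iterate_succ_apply' f n, Function.iterate_succ_apply' f (n + 1)]
      exact hf n _ _ ih
  have hcauchy {m n : ℕ} (hmn : m ≤ n) : f^[m] 0 ≡ f^[n] 0 [SMOD (I ^ m • ⊤ : Submodule A A)] := by
    induction n, hmn using Nat.le_induction with
    | base => rfl
    | succ n hmn ih => exact ih.trans (hsmod.2 (Ideal.pow_le_pow_right hmn (hstep n)))
  obtain ⟨s, hs⟩ := IsPrecomplete.prec' (I := I) (fun n ↦ f^[n] 0) hcauchy
  refine ⟨s, (IsHausdorff.eq_iff_smodEq (I := I)).2 fun n ↦ ?_⟩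
  have hfs : f s ≡ f^[n + 1] 0 [SMOD (I ^ n • ⊤ : Submodule A A)] := by
    rw [hsmod, Function.iterate_succ_apply']
    exact Ideal.pow_le_pow_right n.le_succ (hf n _ _ (hsmod.1 (hs n).symm))
  exact hfs.trans ((hsmod.2 (hstep n)).symm.trans (hs n))

open Polynomial in
/-- The substitution `z = (q₀ / q₁) s` turns `q(z) = 0` into a fixed point equation for `s`. -/
lemma eval_eq_zero_of_fixedPoint {K : Type*} [Field K] {q : K[X]} (h1 : q.coeff 1 ≠ 0) {s : K}
    (hs : s = -∑ i ∈ Finset.range q.natDegree,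
      q.coeff (i + 2) * q.coeff 0 ^ (i + 1) / q.coeff 1 ^ (i + 2) * s ^ (i + 2) - 1) :
    q.eval (q.coeff 0 / q.coeff 1 * s) = 0 := by
  have hterm (i : ℕ) : q.coeff (i + 1 + 1) * (q.coeff 0 / q.coeff 1 * s) ^ (i + 1 + 1) =
      q.coeff 0 * (q.coeff (i + 2) * q.coeff 0 ^ (i + 1) / q.coeff 1 ^ (i + 2) * s ^ (i + 2)) := by
    rw [mul_pow, div_pow]
    ring
  rw [eval_eq_sum_range' (n := q.natDegree + 2) (by omega), Finset.sum_range_succ',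
    Finset.sum_range_succ']
  simp only [hterm, ← Finset.mul_sum, zero_add, pow_one, pow_zero]
  linear_combination q.coeff 0 * hs + s * mul_div_cancel₀ (q.coeff 0) h1

lemma natCast_wittVector_ne_zero {p : ℕ} [Fact p.Prime] {L : Type*} [Field L] [CharP L p] {n : ℕ}
    (hn : n ≠ 0) : (n : WittVector p L) ≠ 0 := by
  obtain ⟨a, m, hm, rfl⟩ := Nat.exists_eq_pow_mul_and_not_dvd hn p (Fact.out : p.Prime).ne_one
  rw [Nat.cast_mul, Nat.cast_pow]
  refine mul_ne_zero (pow_ne_zero _ (WittVector.p_nonzero p L)) fun h0 ↦ hm ?_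
  rw [← CharP.cast_eq_zero_iff L p m, ← map_natCast (WittVector.constantCoeff (p := p)), h0,
    map_zero]

section CoarseValuation
open Filter Polynomial

variable {p : ℕ} [Fact p.Prime] {κ : Type*} [Field κ] [CharP κ p] [PerfectRing κ p]

lemma exists_wittGerm_eq_or_eq_inv (x : WittUltrapower p κ) :
    (∃ u, wittGerm p κ u = x) ∨ ∃ u, wittGerm p κ u = x⁻¹ := by
  obtain ⟨f, rfl⟩ := seqGerm_surjective _ x
  have h (n : ℕ) := ValuationRing.isInteger_or_isInteger (WittVector p κ) (f n)
  exact (Ultrafilter.eventually_or.1 (Eventually.of_forall h)).imp exists_wittGerm exists_wittGerm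

variable (p κ)

/-- The coarse valuation ring of the ultrapower: the localization at `p` of the ring of classes of
sequences of Witt vectors. -/
def coarseRing : ValuationSubring (WittUltrapower p κ) where
  carrier := {x | ∃ (n : ℕ) (u : _), x * (p : WittUltrapower p κ) ^ n = wittGerm p κ u}
  mul_mem' := by
    rintro x y ⟨n, u, hx⟩ ⟨m, w, hy⟩
    refine ⟨n + m, u * w, ?_⟩
    rw [map_mul, ← hx, ← hy]
    ring
  one_mem' := ⟨0, 1, by simp⟩
  add_mem' := by
    rintro x y ⟨n, u, hx⟩ ⟨m, w, hy⟩
    refine ⟨n + m, u * p ^ m + w * p ^ n, ?_⟩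
    simp only [map_add, map_mul, map_pow, map_natCast, ← hx, ← hy]
    ring
  zero_mem' := ⟨0, 0, by simp⟩
  neg_mem' := by
    rintro x ⟨n, u, hx⟩
    exact ⟨n, -u, by rw [neg_mul, hx, map_neg]⟩
  mem_or_inv_mem' x := (exists_wittGerm_eq_or_eq_inv x).imp
    (fun ⟨u, hu⟩ ↦ ⟨0, u, by simp [hu]⟩) fun ⟨u, hu⟩ ↦ ⟨0, u, by simp [hu]⟩

/-- The coarse valuation of the ultrapower, for which `p` is a unit. -/
abbrev cval : Valuation (WittUltrapower p κ) (coarseRing p κ).ValueGroup :=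
  (coarseRing p κ).valuation

variable {p κ}

lemma cval_le_one_iff {x : WittUltrapower p κ} : cval p κ x ≤ 1 ↔
    ∃ (n : ℕ) (u : _), x * (p : WittUltrapower p κ) ^ n = wittGerm p κ u :=
  (coarseRing p κ).valuation_le_one_iff x

lemma cval_wittGerm_le_one (u : WittVector p (ℕ → κ)) : cval p κ (wittGerm p κ u) ≤ 1 :=
  cval_le_one_iff.2 ⟨0, u, by simp⟩

lemma cval_natCast_p : cval p κ (p : WittUltrapower p κ) = 1 := by
  refine le_antisymm (cval_le_one_iff.2 ⟨0, p, by simp⟩) ?_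
  have hinv : cval p κ (p : WittUltrapower p κ)⁻¹ ≤ 1 :=
    cval_le_one_iff.2 ⟨1, 1, by simp [inv_mul_cancel₀ (natCast_p_ne_zero (p := p) (κ := κ))]⟩
  rw [map_inv₀] at hinv
  exact (inv_le_one₀ (zero_lt_iff.2 ((cval p κ).ne_zero_iff.2 natCast_p_ne_zero))).1 hinv

lemma exists_wittGerm_of_cval_lt_one {x : WittUltrapower p κ} (h : cval p κ x < 1) :
    ∃ u, wittGerm p κ u = x := by
  rcases eq_or_ne x 0 with rfl | hx
  · exact ⟨0, map_zero _⟩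
  refine (exists_wittGerm_eq_or_eq_inv x).resolve_right fun ⟨u, hu⟩ ↦ h.not_ge ?_
  have hinv := cval_wittGerm_le_one u
  rw [hu, map_inv₀] at hinv
  exact (inv_le_one₀ (zero_lt_iff.2 ((cval p κ).ne_zero_iff.2 hx))).1 hinv

lemma exists_wittGerm_mul_pow_of_cval_lt_one {x : WittUltrapower p κ} (h : cval p κ x < 1)
    (m : ℕ) : ∃ t, x = wittGerm p κ t * (p : WittUltrapower p κ) ^ m := by
  obtain ⟨t, ht⟩ := exists_wittGerm_of_cval_lt_one (p := p) (κ := κ)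
    (x := x / (p : WittUltrapower p κ) ^ m) (by
      rwa [map_div₀, map_pow, cval_natCast_p, one_pow, div_one])
  exact ⟨t, by rw [ht, div_mul_cancel₀ _ (pow_ne_zero _ natCast_p_ne_zero)]⟩

lemma cval_wittGerm_lt_one_iff {u : WittVector p (ℕ → κ)} :
    cval p κ (wittGerm p κ u) < 1 ↔ wittRed p κ u = 0 := by
  refine ⟨fun h ↦ wittRed_eq_zero_iff.2 (exists_wittGerm_mul_pow_of_cval_lt_one h), fun hu ↦ ?_⟩
  refine lt_of_le_of_ne (cval_wittGerm_le_one u) fun h1 ↦ ?_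
  have h0 : wittGerm p κ u ≠ 0 := (cval p κ).ne_zero_iff.1 (by rw [h1]; exact one_ne_zero)
  have hinv : cval p κ (wittGerm p κ u)⁻¹ ≤ 1 := by rw [map_inv₀, h1, inv_one]
  obtain ⟨n, w, hw⟩ := cval_le_one_iff.1 hinv
  obtain ⟨t, ht⟩ := wittRed_eq_zero_iff.1 hu (n + 1)
  have hp := pow_ne_zero n (natCast_p_ne_zero (p := p) (κ := κ))
  refine wittGerm_mul_p_ne_one (w * t) (mul_right_cancel₀ hp ?_)
  rw [map_mul, ← hw, one_mul]
  calc (wittGerm p κ u)⁻¹ * (p : WittUltrapower p κ) ^ n * wittGerm p κ t * p * p ^ n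
      = (wittGerm p κ u)⁻¹ * (wittGerm p κ t * p ^ (n + 1)) * p ^ n := by ring
    _ = p ^ n := by rw [← ht, inv_mul_cancel₀ h0, one_mul]

lemma cval_wittGerm_eq_one {u : WittVector p (ℕ → κ)} (h : wittRed p κ u ≠ 0) :
    cval p κ (wittGerm p κ u) = 1 :=
  le_antisymm (cval_wittGerm_le_one u) (not_lt.1 fun h1 ↦ h (cval_wittGerm_lt_one_iff.1 h1))

lemma residueCharZero_cval : ResidueCharZero (cval p κ) := fun n hn ↦ by
  rw [← map_natCast (wittGerm p κ) n]
  refine cval_wittGerm_eq_one ?_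
  rw [map_natCast]
  exact natCast_wittVector_ne_zero hn

lemma exists_wittGerm_fixedPoint {r : ℕ → WittUltrapower p κ} (hr : ∀ i, cval p κ (r i) < 1)
    (d : ℕ) : ∃ s, wittGerm p κ s =
      -∑ i ∈ Finset.range d, r i * wittGerm p κ s ^ (i + 2) - 1 := by
  choose w hw using fun i ↦ exists_wittGerm_mul_pow_of_cval_lt_one (hr i) 1
  let h : (WittVector p (ℕ → κ))[X] := ∑ i ∈ Finset.range d, C (w i) * X ^ (i + 2)
  obtain ⟨s, hs⟩ := exists_fixedPoint_of_adic_contraction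
    (I := Ideal.span {(p : WittVector p (ℕ → κ))}) (f := fun s ↦ -(p * h.eval s) - 1)
    fun n x y hxy ↦ by
      rw [Ideal.span_singleton_pow, Ideal.mem_span_singleton] at hxy ⊢
      have hdiff : -(p * h.eval x) - 1 - (-(p * h.eval y) - 1) =
          -(p * (h.eval x - h.eval y)) := by ring
      rw [hdiff, pow_succ', dvd_neg]
      exact mul_dvd_mul_left _ (hxy.trans (sub_dvd_eval_sub x y h))
  have heval : wittGerm p κ (p * h.eval s) =
      ∑ i ∈ Finset.range d, r i * wittGerm p κ s ^ (i + 2) := by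
    simp only [h, eval_finsetSum, eval_mul, eval_C, eval_pow, eval_X, map_mul, map_natCast,
      map_sum, map_pow, Finset.mul_sum, hw, pow_one]
    exact Finset.sum_congr rfl fun i _ ↦ by ring
  refine ⟨s, ?_⟩
  conv_lhs => rw [← hs, map_sub, map_neg, map_one, heval]

lemma isHenselianValuation_cval : IsHenselianValuation (cval p κ) := by
  intro q hq hq0 hq1
  have h1 : q.coeff 1 ≠ 0 := (cval p κ).ne_zero_iff.1 (by rw [hq1]; exact one_ne_zero)
  have hlt (i : ℕ) :
      cval p κ (q.coeff (i + 2) * q.coeff 0 ^ (i + 1) / q.coeff 1 ^ (i + 2)) < 1 := by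
    simp only [map_div₀, map_mul, map_pow, hq1, one_pow, div_one]
    exact mul_lt_one_of_nonneg_of_lt_one_right (hq _) zero_le (pow_lt_one₀ zero_le hq0 (by omega))
  obtain ⟨s, hs⟩ := exists_wittGerm_fixedPoint hlt q.natDegree
  refine ⟨q.coeff 0 / q.coeff 1 * wittGerm p κ s, ?_, eval_eq_zero_of_fixedPoint h1 hs⟩
  rw [map_mul, map_div₀, hq1, div_one]
  exact mul_lt_one_of_nonneg_of_lt_one_left zero_le hq0 (cval_wittGerm_le_one s)

end CoarseValuation

lemma ne_zero_of_coeff_zero {p : ℕ} [Fact p.Prime] {L : Type*} [Field L] {s : WittVector p L}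
    (hs : s.coeff 0 ≠ 0) : s ≠ 0 := by
  rintro rfl
  exact hs (WittVector.zero_coeff p L 0)

section Reduction
open Filter

variable {p : ℕ} [Fact p.Prime] {κ : Type*} [Field κ] [CharP κ p]

lemma le_of_zpow_mul_eq {a b : WittVector p κ} {i j : ℤ} (ha : a.coeff 0 ≠ 0)
    (hab : (p : FractionRing (WittVector p κ)) ^ i * algebraMap _ _ a = p ^ j * algebraMap _ _ b) :
    j ≤ i := by
  have hp := WittVector.FractionRing.p_nonzero p κ
  by_contra! hij
  obtain ⟨n, rfl⟩ := Int.le.dest (Int.add_one_le_of_lt hij)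
  have hdvd : a = b * (p : WittVector p κ) ^ n * p := by
    apply IsFractionRing.injective (WittVector p κ) (FractionRing (WittVector p κ))
    refine mul_left_cancel₀ (zpow_ne_zero i hp) (hab.trans ?_)
    simp only [zpow_add₀ hp, zpow_one, zpow_natCast, map_mul, map_pow, map_natCast]
    ring
  exact ha (by rw [hdvd, WittVector.mul_charP_coeff_zero])

lemma eventually_eq_add_or_forall_add_le {γ δ : ℕ → ℤ}
    (h : ∀ᶠ n in (hyperfilter ℕ : Filter ℕ), δ n ≤ γ n) :
    (∃ m : ℕ, ∀ᶠ n in (hyperfilter ℕ : Filter ℕ), γ n = δ n + m) ∨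
      ∀ m : ℕ, ∀ᶠ n in (hyperfilter ℕ : Filter ℕ), δ n + m ≤ γ n := by
  refine or_iff_not_imp_left.2 fun hne m ↦ ?_
  push Not at hne
  induction m with
  | zero => simpa using h
  | succ m ih =>
    filter_upwards [ih, hne m] with n hle hn
    push_cast
    omega

lemma exists_wittGerm_eq_pPow_iff {γ : ℕ → ℤ} : (∃ u, wittGerm p κ u = pPow p κ γ) ↔
    ∀ᶠ n in (hyperfilter ℕ : Filter ℕ), 0 ≤ γ n := by
  refine ⟨fun ⟨u, hu⟩ ↦ ?_, fun h ↦ exists_wittGerm ?_⟩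
  · rw [wittGerm_apply, pPow, seqGerm_eq_iff] at hu
    filter_upwards [hu] with n hn
    refine le_of_zpow_mul_eq (a := 1) (b := wittAt p κ n u) (by simp) ?_
    rw [map_one, mul_one, zpow_zero, one_mul, hn]
  · filter_upwards [h] with n hn
    exact ⟨p ^ (γ n).toNat, by
      rw [map_pow, map_natCast, ← zpow_natCast, Int.toNat_of_nonneg hn]⟩

lemma exists_wittGerm_mul_eq_one {u : WittVector p (ℕ → κ)} (h : (wittRed p κ u).coeff 0 ≠ 0) :
    ∃ w, wittGerm p κ u * wittGerm p κ w = 1 := by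
  rw [wittRed_coeff, seqGerm_ne_zero_iff] at h
  have hinv : ∀ᶠ n in (hyperfilter ℕ : Filter ℕ), ∃ t, wittAt p κ n u * t = 1 := by
    filter_upwards [h] with n hn
    exact (WittVector.isUnit_of_coeff_zero_ne_zero (wittAt p κ n u) hn).exists_right_inv
  obtain ⟨t, ht⟩ := hinv.choice
  obtain ⟨w, hw⟩ := exists_forall_wittAt_eq t
  refine ⟨w, ?_⟩
  rw [← map_mul, ← map_one (wittGerm p κ), wittGerm_eq_iff]
  filter_upwards [ht] with n hn
  rw [map_mul, hw, hn, map_one]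

section
variable [PerfectRing κ p]

lemma cval_pPow_le_one_iff {γ : ℕ → ℤ} : cval p κ (pPow p κ γ) ≤ 1 ↔
    ∃ m : ℕ, ∀ᶠ n in (hyperfilter ℕ : Filter ℕ), -(m : ℤ) ≤ γ n := by
  have hshift (m : ℕ) : pPow p κ γ * (p : WittUltrapower p κ) ^ m =
      pPow p κ (γ + fun _ ↦ (m : ℤ)) := by
    rw [pPow_add, pPow_const, zpow_natCast]
  simp only [cval_le_one_iff, hshift, eq_comm (b := wittGerm p κ _), exists_wittGerm_eq_pPow_iff,
    Pi.add_apply, neg_le_iff_add_nonneg]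

lemma cval_pPow_const (m : ℤ) : cval p κ (pPow p κ fun _ ↦ m) = 1 := by
  rw [pPow_const, map_zpow₀, cval_natCast_p, one_zpow]

lemma exists_wittRed_eq_zero_of_forall_le {γ : ℕ → ℤ}
    (h : ∀ m : ℕ, ∀ᶠ n in (hyperfilter ℕ : Filter ℕ), (m : ℤ) ≤ γ n) :
    ∃ u, wittGerm p κ u = pPow p κ γ ∧ wittRed p κ u = 0 := by
  obtain ⟨u, hu⟩ := (exists_wittGerm_eq_pPow_iff (p := p) (κ := κ) (γ := γ)).2 (by simpa using h 0)
  refine ⟨u, hu, wittRed_eq_zero_iff.2 fun m ↦ ?_⟩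
  obtain ⟨t, ht⟩ := (exists_wittGerm_eq_pPow_iff (p := p) (κ := κ)
    (γ := γ + fun _ ↦ -(m : ℤ))).2 ((h m).mono fun n hn ↦ by simpa using hn)
  refine ⟨t, ?_⟩
  rw [hu, ht, pPow_add, pPow_const, zpow_neg, zpow_natCast,
    inv_mul_cancel_right₀ (pow_ne_zero _ natCast_p_ne_zero)]

end

section HasReduction
variable {L : Type*} [Field L] (i : L →+* Ultrapower κ)

/-- `x` is the product of `p ^ γ` and a sequence of Witt vectors whose reduction is the image under
`i` of the Witt vector `s`. If `s` is a unit, then `γ` and `s` make up the leading term of `x` for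
the coarse valuation. -/
def HasReduction (γ : ℕ → ℤ) (s : WittVector p L) (x : WittUltrapower p κ) : Prop :=
  ∃ u, x = pPow p κ γ * wittGerm p κ u ∧ wittRed p κ u = WittVector.map i s

variable {i} {γ δ : ℕ → ℤ} {s t : WittVector p L} {x y : WittUltrapower p κ}

namespace HasReduction

variable (i) in
lemma zero (γ : ℕ → ℤ) : HasReduction i γ (0 : WittVector p L) 0 := ⟨0, by simp, by simp⟩

variable (i) in
lemma one : HasReduction i 0 (1 : WittVector p L) 1 := ⟨1, by simp [pPow_zero], by simp⟩

lemma add (hx : HasReduction i γ s x) (hy : HasReduction i γ t y) :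
    HasReduction i γ (s + t) (x + y) := by
  obtain ⟨u, rfl, hu⟩ := hx
  obtain ⟨w, rfl, hw⟩ := hy
  exact ⟨u + w, by rw [map_add, mul_add], by rw [map_add, map_add, hu, hw]⟩

lemma neg (hx : HasReduction i γ s x) : HasReduction i γ (-s) (-x) := by
  obtain ⟨u, rfl, hu⟩ := hx
  exact ⟨-u, by rw [map_neg, mul_neg], by rw [map_neg, map_neg, hu]⟩

lemma mul (hx : HasReduction i γ s x) (hy : HasReduction i δ t y) :
    HasReduction i (γ + δ) (s * t) (x * y) := by
  obtain ⟨u, rfl, hu⟩ := hx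
  obtain ⟨w, rfl, hw⟩ := hy
  exact ⟨u * w, by rw [pPow_add, map_mul, mul_mul_mul_comm], by rw [map_mul, map_mul, hu, hw]⟩

lemma mul_pow {m : ℕ} (hx : HasReduction i γ s x)
    (h : ∀ᶠ n in (hyperfilter ℕ : Filter ℕ), γ n = δ n + m) :
    HasReduction i δ (s * (p : WittVector p L) ^ m) x := by
  obtain ⟨u, rfl, hu⟩ := hx
  refine ⟨u * (p : WittVector p (ℕ → κ)) ^ m, ?_, ?_⟩
  · rw [pPow_congr (δ := δ + fun _ ↦ (m : ℤ)) h, pPow_add, pPow_const, zpow_natCast, map_mul,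
      map_pow, map_natCast]
    ring
  · simp only [map_mul, map_pow, map_natCast, hu]

lemma inv (hx : HasReduction i γ s x) (hst : s * t = 1) : HasReduction i (-γ) t x⁻¹ := by
  obtain ⟨u, rfl, hu⟩ := hx
  have hmap : WittVector.map i s * WittVector.map i t = 1 := by rw [← map_mul, hst, map_one]
  have hunit : (wittRed p κ u).coeff 0 ≠ 0 := by
    rw [hu]
    exact ((IsUnit.of_mul_eq_one _ hmap).map (WittVector.constantCoeff (p := p))).ne_zero
  obtain ⟨w, hw⟩ := exists_wittGerm_mul_eq_one hunit
  refine ⟨w, by rw [mul_inv, pPow_neg, eq_inv_of_mul_eq_one_right hw], ?_⟩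
  refine mul_left_cancel₀ (left_ne_zero_of_mul_eq_one hmap) ?_
  rw [hmap, ← hu, ← map_mul, ← map_one (wittRed p κ)]
  exact wittRed_eq_of_wittGerm_eq (by rw [map_mul, hw, map_one])

variable [PerfectRing κ p]

lemma of_mul_pow {m : ℕ} (hx : HasReduction i γ (s * (p : WittVector p L) ^ m) x)
    (h : ∀ n, δ n = γ n + m) : HasReduction i δ s x := by
  obtain ⟨u, rfl, hu⟩ := hx
  rw [map_mul, map_pow, map_natCast] at hu
  obtain ⟨t, hut, ht⟩ := exists_wittGerm_eq_mul_pow hu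
  obtain rfl : δ = γ + fun _ ↦ (m : ℤ) := _root_.funext h
  exact ⟨t, by rw [hut, pPow_add, pPow_const, zpow_natCast, mul_right_comm, mul_assoc], ht⟩

lemma of_forall_add_le (hx : HasReduction i γ s x)
    (h : ∀ m : ℕ, ∀ᶠ n in (hyperfilter ℕ : Filter ℕ), δ n + m ≤ γ n) : HasReduction i δ 0 x := by
  obtain ⟨u, rfl, -⟩ := hx
  obtain ⟨w, hw, hw0⟩ := exists_wittRed_eq_zero_of_forall_le (p := p) (κ := κ) (γ := γ - δ)
    fun m ↦ (h m).mono fun n hn ↦ by rw [Pi.sub_apply]; omega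
  refine ⟨w * u, ?_, by rw [map_mul, hw0, zero_mul, map_zero]⟩
  rw [map_mul, hw, ← mul_assoc, ← pPow_add, add_sub_cancel]

variable (i) in
lemma of_cval_lt_one (hx : cval p κ x < 1) : HasReduction i 0 (0 : WittVector p L) x := by
  obtain ⟨u, rfl⟩ := exists_wittGerm_of_cval_lt_one hx
  exact ⟨u, by rw [pPow_zero, one_mul], by rw [cval_wittGerm_lt_one_iff.1 hx, map_zero]⟩

lemma cval_le (hx : HasReduction i γ s x) : cval p κ x ≤ cval p κ (pPow p κ γ) := by
  obtain ⟨u, rfl, -⟩ := hx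
  rw [map_mul]
  exact mul_le_of_le_one_right' (cval_wittGerm_le_one u)

lemma cval_lt_iff (hx : HasReduction i γ s x) : cval p κ x < cval p κ (pPow p κ γ) ↔ s = 0 := by
  obtain ⟨u, rfl, hu⟩ := hx
  have hγ : 0 < cval p κ (pPow p κ γ) := zero_lt_iff.2 ((cval p κ).ne_zero_iff.2 (pPow_ne_zero γ))
  rw [map_mul, mul_lt_iff_lt_one_right hγ, cval_wittGerm_lt_one_iff, hu,
    map_eq_zero_iff _ (WittVector.map_injective i i.injective)]

lemma cval_eq (hx : HasReduction i γ s x) (hs : s ≠ 0) : cval p κ x = cval p κ (pPow p κ γ) :=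
  hx.cval_le.eq_of_not_lt fun hlt ↦ hs (hx.cval_lt_iff.1 hlt)

lemma ne_zero (hx : HasReduction i γ s x) (hs : s ≠ 0) : x ≠ 0 :=
  (cval p κ).ne_zero_iff.1 (hx.cval_eq hs ▸ (cval p κ).ne_zero_iff.2 (pPow_ne_zero γ))

end HasReduction
end HasReduction
end Reduction

section WittCorr
open Filter

variable {p : ℕ} [Fact p.Prime] {κ₁ κ₂ L : Type*} [Field κ₁] [CharP κ₁ p] [Field κ₂]
  [CharP κ₂ p] [Field L]
  (i₁ : L →+* Ultrapower κ₁) (i₂ : L →+* Ultrapower κ₂)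

/-- The pairs that are integral for the coarse valuations and have matching residues. -/
def resPairs : Subring (WittUltrapower p κ₁ × WittUltrapower p κ₂) where
  carrier := {a | ∃ (m : ℕ) (s : WittVector p L),
    HasReduction i₁ (fun _ ↦ -(m : ℤ)) s a.1 ∧ HasReduction i₂ (fun _ ↦ -(m : ℤ)) s a.2}
  zero_mem' := ⟨0, 0, .zero i₁ _, .zero i₂ _⟩
  one_mem' := ⟨0, 1, .one i₁, .one i₂⟩
  neg_mem' := fun ⟨m, s, h₁, h₂⟩ ↦ ⟨m, -s, h₁.neg, h₂.neg⟩
  add_mem' := by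
    rintro a b ⟨m, s, ha₁, ha₂⟩ ⟨n, t, hb₁, hb₂⟩
    have hm : ∀ᶠ _ in (hyperfilter ℕ : Filter ℕ), -(m : ℤ) = -(m + n : ℕ) + (n : ℕ) := by simp
    have hn : ∀ᶠ _ in (hyperfilter ℕ : Filter ℕ), -(n : ℤ) = -(m + n : ℕ) + (m : ℕ) := by simp
    exact ⟨m + n, s * p ^ n + t * p ^ m, (ha₁.mul_pow hm).add (hb₁.mul_pow hn),
      (ha₂.mul_pow hm).add (hb₂.mul_pow hn)⟩
  mul_mem' := by
    rintro a b ⟨m, s, ha₁, ha₂⟩ ⟨n, t, hb₁, hb₂⟩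
    have hmn : (fun _ : ℕ ↦ -((m + n : ℕ) : ℤ)) = (fun _ ↦ -(m : ℤ)) + fun _ ↦ -(n : ℤ) := by
      ext
      simp [add_comm]
    exact ⟨m + n, s * t, hmn ▸ ha₁.mul hb₁, hmn ▸ ha₂.mul hb₂⟩

/-- Nonzero pairs with matching leading terms. -/
def IsLead (a : WittUltrapower p κ₁ × WittUltrapower p κ₂) : Prop :=
  ∃ (γ : ℕ → ℤ) (s : WittVector p L), s.coeff 0 ≠ 0 ∧
    HasReduction i₁ γ s a.1 ∧ HasReduction i₂ γ s a.2

variable {i₁ i₂} {a b : WittUltrapower p κ₁ × WittUltrapower p κ₂}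

namespace IsLead

lemma mul (ha : IsLead i₁ i₂ a) (hb : IsLead i₁ i₂ b) : IsLead i₁ i₂ (a * b) := by
  obtain ⟨γ, s, hs, ha₁, ha₂⟩ := ha
  obtain ⟨δ, t, ht, hb₁, hb₂⟩ := hb
  exact ⟨γ + δ, s * t, by rw [WittVector.mul_coeff_zero]; exact mul_ne_zero hs ht,
    ha₁.mul hb₁, ha₂.mul hb₂⟩

lemma inv [CharP L p] (ha : IsLead i₁ i₂ a) : IsLead i₁ i₂ a⁻¹ := by
  obtain ⟨γ, s, hs, h₁, h₂⟩ := ha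
  obtain ⟨t, hst⟩ := (WittVector.isUnit_of_coeff_zero_ne_zero s hs).exists_right_inv
  have ht : IsUnit t := .of_mul_eq_one_right _ hst
  exact ⟨-γ, t, (ht.map (WittVector.constantCoeff (p := p))).ne_zero, h₁.inv hst, h₂.inv hst⟩

variable [PerfectRing κ₁ p] [PerfectRing κ₂ p]

lemma ne_zero (ha : IsLead i₁ i₂ a) : a.1 ≠ 0 ∧ a.2 ≠ 0 := by
  obtain ⟨γ, s, hs, h₁, h₂⟩ := ha
  exact ⟨h₁.ne_zero (ne_zero_of_coeff_zero hs), h₂.ne_zero (ne_zero_of_coeff_zero hs)⟩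

lemma cval_le_one_iff (ha : IsLead i₁ i₂ a) : cval p κ₁ a.1 ≤ 1 ↔ cval p κ₂ a.2 ≤ 1 := by
  obtain ⟨γ, s, hs, h₁, h₂⟩ := ha
  rw [h₁.cval_eq (ne_zero_of_coeff_zero hs), h₂.cval_eq (ne_zero_of_coeff_zero hs),
    cval_pPow_le_one_iff, cval_pPow_le_one_iff]

lemma mem_resPairs (ha : IsLead i₁ i₂ a) (hle : cval p κ₁ a.1 ≤ 1) : a ∈ resPairs i₁ i₂ := by
  obtain ⟨γ, s, hs, h₁, h₂⟩ := ha
  rw [h₁.cval_eq (ne_zero_of_coeff_zero hs)] at hle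
  obtain ⟨m, hm⟩ := cval_pPow_le_one_iff.1 hle
  rcases eventually_eq_add_or_forall_add_le hm with ⟨j, hj⟩ | hinf
  · exact ⟨m, s * p ^ j, h₁.mul_pow hj, h₂.mul_pow hj⟩
  · exact ⟨m, 0, h₁.of_forall_add_le hinf, h₂.of_forall_add_le hinf⟩

variable [CharP L p] [PerfectRing L p]

lemma of_mem_resPairs (ha : a ∈ resPairs i₁ i₂) (hone : cval p κ₁ a.1 = 1) : IsLead i₁ i₂ a := by
  obtain ⟨m, s, h₁, h₂⟩ := ha
  have hs : s ≠ 0 := fun hs ↦ ((h₁.cval_lt_iff).2 hs).ne (by rw [hone, cval_pPow_const])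
  obtain ⟨j, t, ht, rfl⟩ := WittVector.exists_eq_pow_p_mul s hs
  rw [mul_comm] at h₁ h₂
  exact ⟨fun _ ↦ -(m : ℤ) + j, t, ht, h₁.of_mul_pow fun _ ↦ rfl, h₂.of_mul_pow fun _ ↦ rfl⟩

end IsLead

variable [PerfectRing κ₁ p] [PerfectRing κ₂ p] [CharP L p] [PerfectRing L p]

variable (i₁ i₂) in
/-- The correspondence of leading terms between the two ultrapowers determined by the two
embeddings of `L`. -/
def wittCorr : LeadCorr (cval p κ₁) (cval p κ₂) where
  lead := {a | a = 0 ∨ IsLead i₁ i₂ a}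
  res := resPairs i₁ i₂
  zero_mem := Or.inl rfl
  mul_mem := by
    rintro a b (rfl | ha) (rfl | hb)
    · exact Or.inl (zero_mul 0)
    · exact Or.inl (zero_mul b)
    · exact Or.inl (mul_zero a)
    · exact Or.inr (ha.mul hb)
  inv_mem := by
    rintro a (rfl | ha)
    · exact Or.inl (Prod.ext inv_zero inv_zero)
    · exact Or.inr ha.inv
  eq_zero_iff := by
    rintro a (rfl | ha)
    · simp
    · exact iff_of_false ha.ne_zero.1 ha.ne_zero.2
  le_one_iff := by
    rintro a (rfl | ha)
    · simp
    · exact ha.cval_le_one_iff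
  one_add_mem {a} ha₁ ha₂ := by
    refine Or.inr ⟨0, 1 + 0, by simp, ?_, ?_⟩
    · exact (HasReduction.one i₁).add (.of_cval_lt_one i₁ ha₁)
    · exact (HasReduction.one i₂).add (.of_cval_lt_one i₂ ha₂)
  le_one_of_mem_res := by
    rintro a ⟨m, s, h₁, h₂⟩
    exact ⟨h₁.cval_le.trans_eq (cval_pPow_const _), h₂.cval_le.trans_eq (cval_pPow_const _)⟩
  lt_one_iff_of_mem_res := by
    rintro a ⟨m, s, h₁, h₂⟩
    rw [← cval_pPow_const (p := p) (κ := κ₁) (-m), ← cval_pPow_const (p := p) (κ := κ₂) (-m),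
      h₁.cval_lt_iff, h₂.cval_lt_iff]
  mem_res_of_mem_lead := by
    rintro a (rfl | ha) hle
    · exact (resPairs i₁ i₂).zero_mem
    · exact ha.mem_resPairs hle
  mem_lead_of_mem_res ha hone := Or.inr (.of_mem_resPairs ha hone)

end WittCorr

section Saturation
open Filter

variable {p : ℕ} [Fact p.Prime] {L : Type*} [Field L]

lemma exists_map_eq_of_coeff_mem_range {R S : Type*} [CommRing R] [CommRing S] {f : R →+* S}
    {w : WittVector p S} (h : ∀ j, w.coeff j ∈ Set.range f) : ∃ s, WittVector.map f s = w := by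
  choose c hc using h
  exact ⟨WittVector.mk p c, by ext j; rw [WittVector.map_coeff, WittVector.coeff_mk, hc]⟩

namespace HasReduction
variable {κ : Type*} [Field κ] [CharP κ p] {i : L →+* Ultrapower κ} {γ δ : ℕ → ℤ}
  {s t : WittVector p L} {x : WittUltrapower p κ}

lemma congr (hx : HasReduction i γ s x)
    (h : ∀ᶠ n in (hyperfilter ℕ : Filter ℕ), γ n = δ n) : HasReduction i δ s x := by
  rwa [HasReduction, ← pPow_congr h]

lemma eventually_le (hx : HasReduction i γ s x) (hs : s.coeff 0 ≠ 0) (hx' : HasReduction i δ t x) :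
    ∀ᶠ n in (hyperfilter ℕ : Filter ℕ), δ n ≤ γ n := by
  obtain ⟨u, rfl, hu⟩ := hx
  obtain ⟨w, huw, -⟩ := hx'
  have hunit : (wittRed p κ u).coeff 0 ≠ 0 := by
    rw [hu, WittVector.map_coeff]
    exact (_root_.map_ne_zero i).2 hs
  rw [wittRed_coeff, seqGerm_ne_zero_iff] at hunit
  rw [pPow, pPow, wittGerm_apply, wittGerm_apply, ← map_mul, ← map_mul, seqGerm_eq_iff] at huw
  filter_upwards [hunit, huw] with n hn hmul
  exact le_of_zpow_mul_eq hn hmul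

lemma unique (hx : HasReduction i γ s x) (hx' : HasReduction i γ t x) : s = t := by
  obtain ⟨u, rfl, hu⟩ := hx
  obtain ⟨w, huw, hw⟩ := hx'
  apply WittVector.map_injective i i.injective
  rw [← hu, ← hw, wittRed_eq_of_wittGerm_eq (mul_left_cancel₀ (pPow_ne_zero γ) huw)]

lemma map_comp {L' : Type*} [Field L'] {i' : L' →+* Ultrapower κ} {j : L →+* L'}
    (hx : HasReduction (i'.comp j) γ s x) : HasReduction i' γ (WittVector.map j s) x := by
  obtain ⟨u, hxu, hu⟩ := hx
  refine ⟨u, hxu, hu.trans ?_⟩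
  ext m
  simp only [WittVector.map_coeff, RingHom.comp_apply]

end HasReduction

section
variable {κ : Type*} [Field κ] [CharP κ p] {i : L →+* Ultrapower κ} {s : WittVector p L}

lemma exists_hasReduction (i : L →+* Ultrapower κ) (γ : ℕ → ℤ) (s : WittVector p L) :
    ∃ x : WittUltrapower p κ, HasReduction i γ s x := by
  choose d hd using fun j ↦ seqGerm_surjective κ (i (s.coeff j))
  refine ⟨_, WittVector.mk p d, rfl, ?_⟩
  ext j
  rw [wittRed_coeff, WittVector.coeff_mk, hd, WittVector.map_coeff]

lemma hasReduction_diag (f : L →+* κ) (γ : ℤ) (s : WittVector p L) :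
    HasReduction ((diag κ).comp f) (fun _ ↦ γ) s
      (diag _ ((p : FractionRing (WittVector p κ)) ^ γ *
        algebraMap _ _ (WittVector.map f s))) := by
  refine ⟨WittVector.map (Pi.constRingHom ℕ κ) (WittVector.map f s), ?_, ?_⟩
  · rw [pPow_const, map_mul, map_zpow₀, map_natCast, wittGerm_apply]
    congr 1
  · ext j
    rfl

lemma hasReduction_seqGerm_iff {γ : ℕ → ℤ} {f : ℕ → FractionRing (WittVector p κ)} {d : ℕ → ℕ → κ}
    (hd : ∀ j, seqGerm κ (d j) = i (s.coeff j)) : HasReduction i γ s (seqGerm _ f) ↔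
      ∀ j, ∀ᶠ n in (hyperfilter ℕ : Filter ℕ), ∃ t : WittVector p κ,
        f n = (p : FractionRing (WittVector p κ)) ^ γ n * algebraMap _ _ t ∧ t.coeff j = d j n := by
  constructor
  · rintro ⟨u, hf, hu⟩ j
    have hcoeff := congrArg (WittVector.coeff · j) hu
    simp only [wittRed_coeff, WittVector.map_coeff, ← hd] at hcoeff
    rw [pPow, wittGerm_apply, ← map_mul, seqGerm_eq_iff] at hf
    filter_upwards [hf, seqGerm_eq_iff.1 hcoeff] with n hfn hn
    exact ⟨wittAt p κ n u, hfn, hn⟩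
  · intro h
    obtain ⟨t, ht⟩ := ((h 0).mono fun n hn ↦ hn.imp fun _ ↦ And.left).choice
    obtain ⟨u, hu⟩ := exists_forall_wittAt_eq t
    refine ⟨u, ?_, ?_⟩
    · rw [pPow, wittGerm_apply, ← map_mul, seqGerm_eq_iff]
      filter_upwards [ht] with n hn
      rw [hn, Pi.mul_apply, hu]
    · ext j
      rw [wittRed_coeff, WittVector.map_coeff, ← hd, seqGerm_eq_iff]
      filter_upwards [ht, h j] with n hn ⟨t', ht', hj⟩
      have htt : t n = t' := by
        apply IsFractionRing.injective (WittVector p κ) (FractionRing (WittVector p κ))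
        exact mul_left_cancel₀ (zpow_ne_zero _ (WittVector.FractionRing.p_nonzero p κ))
          (hn.symm.trans ht')
      rw [← hj, ← htt, ← hu]
      rfl

end

variable {κ₁ κ₂ : Type*} [Field κ₁] [CharP κ₁ p] [Field κ₂] [CharP κ₂ p]
  {i₁ : L →+* Ultrapower κ₁} {i₂ : L →+* Ultrapower κ₂}

lemma IsLead.hasReduction_snd {a : WittUltrapower p κ₁ × WittUltrapower p κ₂} {γ : ℕ → ℤ}
    {s : WittVector p L} (ha : IsLead i₁ i₂ a) (hs : s.coeff 0 ≠ 0)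
    (h₁ : HasReduction i₁ γ s a.1) : HasReduction i₂ γ s a.2 := by
  obtain ⟨δ, t, ht, h₁', h₂'⟩ := ha
  have hδγ : ∀ᶠ n in (hyperfilter ℕ : Filter ℕ), δ n = γ n := by
    filter_upwards [h₁.eventually_le hs h₁', h₁'.eventually_le ht h₁] with n hle hge
    exact le_antisymm hle hge
  obtain rfl := (h₁'.congr hδγ).unique h₁
  exact h₂'.congr hδγ

variable [PerfectRing κ₁ p] [PerfectRing κ₂ p] [CharP L p] [PerfectRing L p]

theorem wittCorr_isSaturated : (wittCorr (p := p) i₁ i₂).IsSaturated := by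
  classical
  intro x S hS hx hfin
  have : Countable S := hS.to_subtype
  have hlead (a : S) (y : WittUltrapower p κ₂) :
      (x, y) - a.1 ∈ (wittCorr i₁ i₂).lead ↔ IsLead i₁ i₂ ((x, y) - a.1) :=
    or_iff_right fun h ↦ hx a a.2 (sub_eq_zero.1 (congrArg Prod.fst h)).symm
  have hterm (a : S) : ∃ (γ : ℕ → ℤ) (s : WittVector p L), s.coeff 0 ≠ 0 ∧
      HasReduction i₁ γ s (x - a.1.1) := by
    obtain ⟨y, hy⟩ := hfin {a.1} (by simp)
    obtain ⟨γ, s, hs, hxs, -⟩ := (hlead a y).1 (hy a (Finset.mem_singleton_self _))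
    exact ⟨γ, s, hs, hxs⟩
  choose γ s hs hxs using hterm
  choose β hβ using fun a : S ↦ seqGerm_surjective _ a.1.2
  choose d hd using fun (a : S) (j : ℕ) ↦ seqGerm_surjective κ₂ (i₂ ((s a).coeff j))
  let P (aj : S × ℕ) (n : ℕ) (z : FractionRing (WittVector p κ₂)) : Prop :=
    ∃ t : WittVector p κ₂, z - β aj.1 n =
      (p : FractionRing (WittVector p κ₂)) ^ γ aj.1 n * algebraMap _ _ t ∧
        t.coeff aj.2 = d aj.1 aj.2 n
  have hP (a : S) (f : ℕ → FractionRing (WittVector p κ₂)) :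
      (x, seqGerm _ f) - a.1 ∈ (wittCorr i₁ i₂).lead ↔
        ∀ j, ∀ᶠ n in (hyperfilter ℕ : Filter ℕ), P (a, j) n (f n) := by
    refine Iff.trans ?_ (hasReduction_seqGerm_iff (γ := γ a) (f := f - β a) (hd a))
    rw [hlead, map_sub, hβ]
    exact ⟨fun h ↦ h.hasReduction_snd (hs a) (hxs a), fun h ↦ ⟨γ a, s a, hs a, hxs a, h⟩⟩
  obtain ⟨f, hf⟩ := exists_seq_of_finite P fun F ↦ by
    obtain ⟨y, hy⟩ := hfin (F.image fun aj ↦ aj.1.1) fun a ha ↦ by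
      obtain ⟨aj, -, rfl⟩ := Finset.mem_image.1 (Finset.mem_coe.1 ha)
      exact aj.1.2
    obtain ⟨f, rfl⟩ := seqGerm_surjective _ y
    have hfF : ∀ aj ∈ F, ∀ᶠ n in (hyperfilter ℕ : Filter ℕ), P aj n (f n) := fun aj haj ↦
      (hP aj.1 f).1 (hy _ (Finset.mem_image_of_mem _ haj)) aj.2
    exact ((eventually_all_finset F).2 hfF).mono fun n hn ↦ ⟨f n, hn⟩
  exact ⟨seqGerm _ f, fun a ha ↦ (hP ⟨a, ha⟩ f).2 fun j ↦ hf (⟨a, ha⟩, j)⟩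

lemma wittCorr_lead_subset {L' : Type*} [Field L'] [CharP L' p] [PerfectRing L' p]
    {i₁' : L' →+* Ultrapower κ₁} {i₂' : L' →+* Ultrapower κ₂} {j : L →+* L'}
    (h₁ : i₁'.comp j = i₁) (h₂ : i₂'.comp j = i₂) :
    (wittCorr (p := p) i₁ i₂).lead ⊆ (wittCorr i₁' i₂').lead := by
  subst h₁ h₂
  rintro a (ha | ⟨γ, s, hs, ha₁, ha₂⟩)
  · exact Or.inl ha
  · exact Or.inr ⟨γ, WittVector.map j s, by simpa [WittVector.map_coeff] using hs,
      ha₁.map_comp, ha₂.map_comp⟩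

lemma exists_mem_wittCorr_lead {γ : ℕ → ℤ} {u : WittVector p (ℕ → κ₁)}
    (hu : (wittRed p κ₁ u).coeff 0 ≠ 0) (hrange : ∀ j, (wittRed p κ₁ u).coeff j ∈ Set.range i₁) :
    ∃ y, (pPow p κ₁ γ * wittGerm p κ₁ u, y) ∈ (wittCorr i₁ i₂).lead := by
  obtain ⟨s, hs⟩ := exists_map_eq_of_coeff_mem_range hrange
  obtain ⟨y, hy⟩ := exists_hasReduction i₂ γ s
  refine ⟨y, Or.inr ⟨γ, s, fun h0 ↦ hu ?_, ⟨u, rfl, hs.symm⟩, hy⟩⟩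
  rw [← hs, WittVector.map_coeff, h0, map_zero]

lemma swap_mem_wittCorr_lead {a : WittUltrapower p κ₁ × WittUltrapower p κ₂}
    (ha : a ∈ (wittCorr i₁ i₂).lead) : a.swap ∈ (wittCorr i₂ i₁).lead := by
  rcases ha with rfl | ⟨γ, s, hs, h₁, h₂⟩
  · exact Or.inl rfl
  · exact Or.inr ⟨γ, s, hs, h₂, h₁⟩

end Saturation

/-! ### Elementary maps between ultrapowers -/

section ElementaryMaps

attribute [local instance] compatibleRingOfRing

section Los
open Filter

lemma realize_term_map {R S α : Type*} [CommRing R] [CommRing S] (f : R →+* S)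
    (t : Language.ring.Term α) (v : α → R) : t.realize (f ∘ v) = f (t.realize v) := by
  induction t with
  | var => rfl
  | func g ts ih => cases g <;> simp [Term.realize, ih]

/-- The ultrapower as a ring is the ultraproduct of Mathlib's model theory. -/
def ultrapowerEquiv (k : Type*) [CommRing k] :
    Ultrapower k ≃[Language.ring] (hyperfilter ℕ : Filter ℕ).Product fun _ ↦ k where
  toEquiv := Quotient.congrRight fun _ _ ↦ Iff.rfl
  map_fun' {n} g x := by
    choose y hy using fun i ↦ seqGerm_surjective k (x i)
    obtain rfl : (fun i ↦ seqGerm k (y i)) = x := _root_.funext hy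
    refine Eq.trans ?_ (Ultraproduct.funMap_cast g y).symm
    cases g <;> simp <;> rfl
  map_rel' r := by cases r

/-- **Łoś's theorem**. -/
lemma realize_seqGerm {k α : Type*} [Field k] (φ : Language.ring.Formula α) (x : α → ℕ → k) :
    φ.Realize (fun i ↦ seqGerm k (x i)) ↔
      ∀ᶠ n in (hyperfilter ℕ : Filter ℕ), φ.Realize fun i ↦ x i n :=
  (StrongHomClass.realize_formula (ultrapowerEquiv k) φ).symm.trans
    (Ultraproduct.realize_formula_cast φ x)

lemma realize_diag {k α : Type*} [Field k] (φ : Language.ring.Formula α) (x : α → k) :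
    φ.Realize (diag k ∘ x) ↔ φ.Realize x :=
  (realize_seqGerm φ fun i _ ↦ x i).trans eventually_const

end Los

section ExistsFormula
variable {α β : Type*} (Θ : Language.ring.Formula (α ⊕ β))

open Classical in
instance finite_occurring : Finite {b : β // Sum.inr b ∈ Θ.freeVarFinset} :=
  Finite.of_injective (β := Θ.freeVarFinset) (fun b ↦ ⟨Sum.inr b.1, b.2⟩) fun b c h ↦ by
    simpa [Subtype.ext_iff] using h

open Classical in
/-- Existential quantification over all variables in `β`, of which only finitely many occur. -/
def existsFormula : Language.ring.Formula α :=
  Formula.iExs {b : β // Sum.inr b ∈ Θ.freeVarFinset}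
    (Θ.restrictFreeVar fun a ↦ match a with
      | ⟨Sum.inl a, _⟩ => Sum.inl a
      | ⟨Sum.inr b, h⟩ => Sum.inr ⟨b, h⟩)

lemma realize_existsFormula {R : Type*} [CommRing R] (a : α → R) :
    (existsFormula Θ).Realize a ↔ ∃ b : β → R, Θ.Realize (Sum.elim a b) := by
  classical
  rw [existsFormula, Formula.realize_iExs]
  constructor
  · rintro ⟨i, hi⟩
    refine ⟨fun b ↦ if h : Sum.inr b ∈ Θ.freeVarFinset then i ⟨b, h⟩ else 0, ?_⟩
    refine (BoundedFormula.realize_restrictFreeVar _ ?_).1 hi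
    rintro ⟨a | b, h⟩
    · rfl
    · simp [h]
  · rintro ⟨b, hb⟩
    refine ⟨fun i ↦ b i, ?_⟩
    refine (BoundedFormula.realize_restrictFreeVar _ ?_).2 hb
    rintro ⟨a | b, h⟩ <;> rfl

end ExistsFormula

lemma exists_realize_of_finite {k α β ι : Type*} [Field k] [Countable ι]
    (Θ : ι → Language.ring.Formula (α ⊕ β)) (a : α → Ultrapower k)
    (h : ∀ F : Finset ι, ∃ b : β → Ultrapower k, ∀ i ∈ F, (Θ i).Realize (Sum.elim a b)) :
    ∃ b : β → Ultrapower k, ∀ i, (Θ i).Realize (Sum.elim a b) := by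
  choose f hf using fun l ↦ seqGerm_surjective k (a l)
  have hlos (Φ : Language.ring.Formula (α ⊕ β)) (g : β → ℕ → k) :
      Φ.Realize (Sum.elim a fun l ↦ seqGerm k (g l)) ↔
        ∀ᶠ n in (Filter.hyperfilter ℕ : Filter ℕ), Φ.Realize (Sum.elim (f · n) (g · n)) := by
    have hcoord (n : ℕ) : Sum.elim (f · n) (g · n) = fun i ↦ Sum.elim f g i n := by
      ext (l | l) <;> rfl
    have hgerm : Sum.elim a (fun l ↦ seqGerm k (g l)) = fun i ↦ seqGerm k (Sum.elim f g i) := by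
      ext (l | l)
      exacts [(hf l).symm, rfl]
    simpa only [hcoord, hgerm] using realize_seqGerm Φ (Sum.elim f g)
  obtain ⟨x, hx⟩ := exists_seq_of_finite
    (fun i n (b : β → k) ↦ (Θ i).Realize (Sum.elim (f · n) b)) fun F ↦ by
      obtain ⟨b, hb⟩ := h F
      choose g hg using fun l ↦ seqGerm_surjective k (b l)
      obtain rfl := _root_.funext hg
      filter_upwards [(Filter.eventually_all_finset F).2 fun i hi ↦ (hlos _ g).1 (hb i hi)]
        with n hn
      exact ⟨(g · n), hn⟩
  exact ⟨fun l ↦ seqGerm k (x · l), fun i ↦ (hlos _ fun l n ↦ x n l).2 (hx i)⟩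

section IsElem
variable {L L' R S : Type*} [CommRing L] [CommRing L'] [CommRing R] [CommRing S]

/-- The partial map `i₂ ∘ i₁⁻¹` is elementary. -/
def IsElem (i₁ : L →+* R) (i₂ : L →+* S) : Prop :=
  ∀ φ : Language.ring.Formula L, φ.Realize i₁ ↔ φ.Realize i₂

variable {i₁ : L →+* R} {i₂ : L →+* S}

lemma IsElem.symm (h : IsElem i₁ i₂) : IsElem i₂ i₁ := fun φ ↦ (h φ).symm

lemma exists_ringHom_of_realize_imp (i : L →+* R) (f : L → S)
    (h : ∀ φ : Language.ring.Formula L, φ.Realize i → φ.Realize f) :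
    ∃ i' : L →+* S, ⇑i' = f ∧ IsElem i i' := by
  have hmap (t₁ t₂ : Language.ring.Term L) (ht : t₁.realize i = t₂.realize i) :
      t₁.realize f = t₂.realize f := Formula.realize_equal.1 (h _ (Formula.realize_equal.2 ht))
  refine ⟨{ toFun := f, map_one' := ?_, map_mul' b c := ?_, map_zero' := ?_, map_add' b c := ?_ },
    rfl, fun φ ↦ ⟨h φ, fun hf ↦ ?_⟩⟩
  · simpa using hmap (.var 1) 1 (by simp)
  · simpa using hmap (.var (b * c)) (.var b * .var c) (by simp)
  · simpa using hmap (.var 0) 0 (by simp)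
  · simpa using hmap (.var (b + c)) (.var b + .var c) (by simp)
  · by_contra hi
    exact h φ.not hi hf

lemma exists_comp_eq_of_range_subset {K : Type*} [Field K] {E E' : Type*} [CommRing E] [Field E']
    {i : E →+* K} {i' : E' →+* K} (h : Set.range i ⊆ Set.range i') :
    ∃ j : E →+* E', i'.comp j = i := by
  let e := RingEquiv.ofBijective i'.rangeRestrict
    ⟨i'.rangeRestrict.injective, i'.rangeRestrict_surjective⟩
  refine ⟨e.symm.toRingHom.comp (i.codRestrict i'.range fun x ↦ h ⟨x, rfl⟩), RingHom.ext fun x ↦ ?_⟩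
  exact congrArg Subtype.val (e.apply_symm_apply _)

end IsElem

section Extension
variable {L L' κ₁ κ₂ : Type*} [Field L] [Countable L] [Field L'] [Countable L'] [Field κ₁]
  [Field κ₂] {i₁ : L →+* Ultrapower κ₁} {i₂ : L →+* Ultrapower κ₂}

lemma IsElem.exists_comp_eq (h : IsElem i₁ i₂) {i₁' : L' →+* Ultrapower κ₁} {j : L →+* L'}
    (hj : i₁'.comp j = i₁) :
    ∃ i₂' : L' →+* Ultrapower κ₂, i₂'.comp j = i₂ ∧ IsElem i₁' i₂' := by
  let type := {Θ : Language.ring.Formula (L ⊕ L') // Θ.Realize (Sum.elim i₁ i₁')}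
  obtain ⟨b, hb⟩ := exists_realize_of_finite (fun Θ : type ↦ Θ.1) i₂ fun F ↦ by
    have hF : (existsFormula (Formula.iInf fun Θ : F ↦ Θ.1.1)).Realize i₁ :=
      (realize_existsFormula _ _).2 ⟨i₁', Formula.realize_iInf.2 fun Θ ↦ Θ.1.2⟩
    obtain ⟨b, hb⟩ := (realize_existsFormula _ _).1 ((h _).1 hF)
    exact ⟨b, fun Θ hΘ ↦ Formula.realize_iInf.1 hb ⟨Θ, hΘ⟩⟩
  obtain ⟨i₂', rfl, hi₂'⟩ := exists_ringHom_of_realize_imp i₁' b fun φ hφ ↦ by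
    simpa [Formula.realize_relabel] using hb ⟨φ.relabel Sum.inr, by simpa [Formula.realize_relabel]⟩
  refine ⟨i₂', RingHom.ext fun l ↦ ?_, hi₂'⟩
  simpa using hb ⟨(Term.var (Sum.inr (j l))).equal (Term.var (Sum.inl l)), by simp [← hj]⟩

end Extension

section CountableClosure

lemma exists_countable_subfield {K : Type*} [Field K] {T : Set K} (hT : T.Countable) :
    ∃ B : Subfield K, T ⊆ B ∧ (B : Set K).Countable ∧ ∀ x : K, IsAlgebraic B x → x ∈ B := by
  let F := Subfield.closure T
  have hF : Cardinal.mk F ≤ Cardinal.aleph0 :=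
    (Subfield.cardinalMk_closure_le_max T).trans (max_le hT.le_aleph0 le_rfl)
  refine ⟨(algebraicClosure F K).toSubfield, fun x hx ↦ ?_, ?_, fun x hx ↦ ?_⟩
  · exact (algebraicClosure F K).algebraMap_mem ⟨x, Subfield.subset_closure hx⟩
  · exact Cardinal.mk_le_aleph0_iff.1 ((Algebra.IsAlgebraic.cardinalMk_le_max F
      (algebraicClosure F K)).trans (max_le hF le_rfl))
  · have hx' : IsAlgebraic (algebraicClosure F K) x := hx
    exact mem_algebraicClosure_iff.2 (hx'.restrictScalars F)

/-- Countable fields are taken in `Type` so that positions of the back-and-forth game do not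
depend on the universes of the two residue fields. -/
lemma exists_countable_perfectField (p : ℕ) [Fact p.Prime] {K : Type*} [Field K] [CharP K p]
    [PerfectRing K p] {T : Set K} (hT : T.Countable) :
    ∃ (L : Type) (_ : Field L) (_ : Countable L) (_ : CharP L p) (_ : PerfectRing L p)
      (i : L →+* K), T ⊆ Set.range i := by
  obtain ⟨B, hTB, hBc, hB⟩ := exists_countable_subfield hT
  have : Countable B := hBc.to_subtype
  let e : Shrink.{0} B ≃+* B := Shrink.ringEquiv.{0} B
  let i : Shrink.{0} B →+* K := B.subtype.comp e.toRingHom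
  have hi : ∀ x ∈ B, ∃ l, i l = x := fun x hx ↦ ⟨e.symm ⟨x, hx⟩, by simp [i]⟩
  have : Countable (Shrink.{0} B) := e.injective.countable
  have hchar : CharP (Shrink.{0} B) p := (RingHom.charP_iff i i.injective p).2 inferInstance
  refine ⟨Shrink.{0} B, inferInstance, inferInstance, hchar,
    PerfectRing.ofSurjective _ _ fun y ↦ ?_, i, fun x hx ↦ hi x (hTB hx)⟩
  obtain ⟨z, hz⟩ := surjective_frobenius K p (i y)
  have hzB : IsAlgebraic B z := .of_pow (Fact.out : p.Prime).pos <| by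
    rw [← frobenius_def, hz]
    exact isAlgebraic_algebraMap (e y)
  obtain ⟨l, rfl⟩ := hi z (hB z hzB)
  exact ⟨l, i.injective (by rw [← hz, RingHom.map_frobenius])⟩

end CountableClosure

instance ultrapowerPerfectRing (p : ℕ) [Fact p.Prime] (κ : Type*) [Field κ] [CharP κ p]
    [PerfectRing κ p] : PerfectRing (Ultrapower κ) p := by
  refine PerfectRing.ofSurjective _ _ fun y ↦ ?_
  obtain ⟨f, rfl⟩ := seqGerm_surjective κ y
  obtain ⟨g, rfl⟩ := surjective_frobenius (ℕ → κ) p f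
  exact ⟨seqGerm κ g, ((seqGerm κ).map_frobenius p g).symm⟩

lemma IsElem.exists_extension {p : ℕ} [Fact p.Prime] {κ₁ κ₂ L : Type*} [Field κ₁] [Field κ₂]
    [CharP κ₁ p] [PerfectRing κ₁ p] [Field L] [Countable L] {i₁ : L →+* Ultrapower κ₁}
    {i₂ : L →+* Ultrapower κ₂} (h : IsElem i₁ i₂) {T : Set (Ultrapower κ₁)} (hT : T.Countable) :
    ∃ (L' : Type) (_ : Field L') (_ : Countable L') (_ : CharP L' p) (_ : PerfectRing L' p)
      (i₁' : L' →+* Ultrapower κ₁) (i₂' : L' →+* Ultrapower κ₂) (j : L →+* L'),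
      i₁'.comp j = i₁ ∧ i₂'.comp j = i₂ ∧ IsElem i₁' i₂' ∧ T ⊆ Set.range i₁' := by
  obtain ⟨L', _, _, _, _, i₁', hrange⟩ :=
    exists_countable_perfectField p (hT.union (Set.countable_range i₁))
  obtain ⟨hTr, hi₁⟩ := Set.union_subset_iff.1 hrange
  obtain ⟨j, hj⟩ := exists_comp_eq_of_range_subset hi₁
  obtain ⟨i₂', hj₂, hi₂'⟩ := h.exists_comp_eq hj
  exact ⟨L', inferInstance, inferInstance, inferInstance, inferInstance, i₁', i₂', j, hj, hj₂,
    hi₂', hTr⟩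

end ElementaryMaps

/-! ### The back-and-forth game -/

section BackAndForth

attribute [local instance] compatibleRingOfRing

variable {p : ℕ} [Fact p.Prime] {κ₁ κ₂ : Type*} [Field κ₁] [CharP κ₁ p]
  [Field κ₂] [CharP κ₂ p]

lemma wittFractionMap_algebraMap (g : κ₁ →+* κ₂) (t : WittVector p κ₁) :
    wittFractionMap p κ₁ κ₂ g (algebraMap _ _ t) = algebraMap _ _ (WittVector.map g t) :=
  IsFractionRing.lift_algebraMap _ t

variable [PerfectRing κ₁ p] [PerfectRing κ₂ p]

/-- The positions of the back-and-forth game: countable subrings of pairs respecting the leading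
terms for some elementary partial map, with countable perfect domain, between the ultrapowers of
the residue fields. -/
def IsPosition (G : Subring (WittUltrapower p κ₁ × WittUltrapower p κ₂)) : Prop :=
  (G : Set (WittUltrapower p κ₁ × WittUltrapower p κ₂)).Countable ∧
  ∃ (L : Type) (_ : Field L) (_ : Countable L) (_ : CharP L p) (_ : PerfectRing L p)
    (i₁ : L →+* Ultrapower κ₁) (i₂ : L →+* Ultrapower κ₂), IsElem i₁ i₂ ∧
    (G : Set (WittUltrapower p κ₁ × WittUltrapower p κ₂)) ⊆ (wittCorr i₁ i₂).lead

namespace IsPosition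
variable {G : Subring (WittUltrapower p κ₁ × WittUltrapower p κ₂)}

lemma fst_eq_iff_snd_eq (hG : IsPosition G) {a b : WittUltrapower p κ₁ × WittUltrapower p κ₂}
    (ha : a ∈ G) (hb : b ∈ G) : a.1 = b.1 ↔ a.2 = b.2 := by
  obtain ⟨-, L, _, _, _, _, i₁, i₂, -, hlead⟩ := hG
  have h := (wittCorr i₁ i₂).eq_zero_iff (hlead (G.sub_mem ha hb))
  rwa [Prod.fst_sub, Prod.snd_sub, sub_eq_zero, sub_eq_zero] at h

lemma swap (hG : IsPosition G) : IsPosition (G.map RingEquiv.prodComm.toRingHom) := by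
  obtain ⟨hc, L, _, _, _, _, i₁, i₂, helem, hlead⟩ := hG
  refine ⟨hc.image _, L, inferInstance, inferInstance, inferInstance, inferInstance, i₂, i₁,
    helem.symm, ?_⟩
  rintro _ ⟨a, ha, rfl⟩
  exact swap_mem_wittCorr_lead (hlead ha)

lemma forth (hG : IsPosition G) (z : WittUltrapower p κ₁) :
    ∃ G', G ≤ G' ∧ IsPosition G' ∧ ∃ y, (z, y) ∈ G' := by
  obtain ⟨hc, L, _, _, _, _, i₁, i₂, helem, hlead⟩ := hG
  obtain ⟨B, hGzB, hBc, hB⟩ := exists_countable_subfield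
    ((hc.image Prod.fst).union (Set.countable_singleton z))
  obtain ⟨hGB, hzB⟩ := Set.union_subset_iff.1 hGzB
  have : Countable B := hBc.to_subtype
  choose γ u hu hb using fun b : {b : B // (b : WittUltrapower p κ₁) ≠ 0} ↦ exists_pPow_mul b.2
  obtain ⟨L', _, _, _, _, i₁', i₂', j, h₁, h₂, helem', hT⟩ := helem.exists_extension (p := p)
    (Set.countable_range fun bj : {b : B // (b : WittUltrapower p κ₁) ≠ 0} × ℕ ↦
      (wittRed p κ₁ (u bj.1)).coeff bj.2)
  have hlift : ∀ x ∈ B, ∃ y, (x, y) ∈ (wittCorr i₁' i₂').lead := by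
    intro x hx
    rcases eq_or_ne x 0 with rfl | hx0
    · exact ⟨0, Or.inl rfl⟩
    · rw [show x = _ from hb ⟨⟨x, hx⟩, hx0⟩]
      exact exists_mem_wittCorr_lead (hu _) fun j ↦ hT ⟨(_, j), rfl⟩
  have hGiso : (wittCorr i₁' i₂').IsPartialIso B G :=
    ⟨hlead.trans (wittCorr_lead_subset h₁ h₂), fun a ha ↦ hGB ⟨a, ha, rfl⟩⟩
  obtain ⟨G', hGG', hG', hdom⟩ := hGiso.exists_extension isHenselianValuation_cval
    residueCharZero_cval isHenselianValuation_cval wittCorr_isSaturated hBc hB hlift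
  exact ⟨G', hGG', ⟨hG'.countable hBc, L', inferInstance, inferInstance, inferInstance,
    inferInstance, i₁', i₂', helem', hG'.subset_lead⟩, hdom z (hzB rfl)⟩

lemma back (hG : IsPosition G) (z : WittUltrapower p κ₂) :
    ∃ G', G ≤ G' ∧ IsPosition G' ∧ ∃ y, (y, z) ∈ G' := by
  obtain ⟨G', hle, hG', y, hy⟩ := hG.swap.forth z
  exact ⟨_, fun a ha ↦ Subring.mem_map.2 ⟨a.swap, hle ⟨a, ha, rfl⟩, rfl⟩, hG'.swap, y,
    ⟨_, hy, rfl⟩⟩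

lemma realize_term_eq_iff {α : Type*} (hG : IsPosition G) (t₁ t₂ : Language.ring.Term α)
    {x : α → WittUltrapower p κ₁ × WittUltrapower p κ₂} (hx : ∀ i, x i ∈ G) :
    t₁.realize (Prod.fst ∘ x) = t₂.realize (Prod.fst ∘ x) ↔
      t₁.realize (Prod.snd ∘ x) = t₂.realize (Prod.snd ∘ x) := by
  lift x to α → G using hx
  have hfst (t : Language.ring.Term α) := realize_term_map ((RingHom.fst _ _).comp G.subtype) t x
  have hsnd (t : Language.ring.Term α) := realize_term_map ((RingHom.snd _ _).comp G.subtype) t x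
  exact (Eq.congr (hfst t₁) (hfst t₂)).trans <|
    (hG.fst_eq_iff_snd_eq (t₁.realize x).2 (t₂.realize x).2).trans
      (Eq.congr (hsnd t₁) (hsnd t₂)).symm

theorem realize_iff {α : Type*} {m : ℕ} (hG : IsPosition G)
    (φ : Language.ring.BoundedFormula α m)
    {x : α → WittUltrapower p κ₁ × WittUltrapower p κ₂} (hx : ∀ i, x i ∈ G)
    {v : Fin m → WittUltrapower p κ₁ × WittUltrapower p κ₂} (hv : ∀ i, v i ∈ G) :
    φ.Realize (Prod.fst ∘ x) (Prod.fst ∘ v) ↔ φ.Realize (Prod.snd ∘ x) (Prod.snd ∘ v) := by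
  induction φ generalizing G with
  | falsum => rfl
  | equal t₁ t₂ =>
    simp only [BoundedFormula.Realize, ← Sum.comp_elim]
    exact hG.realize_term_eq_iff t₁ t₂ (Sum.forall.2 ⟨hx, hv⟩)
  | rel R => cases R
  | imp _ _ ih₁ ih₂ => simp only [BoundedFormula.Realize, ih₁ hG hx hv, ih₂ hG hx hv]
  | all φ ih =>
    have hsnoc {G' : Subring (WittUltrapower p κ₁ × WittUltrapower p κ₂)} (hle : G ≤ G')
        (hG' : IsPosition G') {y : WittUltrapower p κ₁ × WittUltrapower p κ₂} (hy : y ∈ G') :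
        φ.Realize (Prod.fst ∘ x) (Fin.snoc (Prod.fst ∘ v) y.1) ↔
          φ.Realize (Prod.snd ∘ x) (Fin.snoc (Prod.snd ∘ v) y.2) := by
      rw [← Fin.comp_snoc, ← Fin.comp_snoc]
      refine ih hG' (fun i ↦ hle (hx i)) (Fin.lastCases ?_ fun i ↦ ?_)
      · rwa [Fin.snoc_last]
      · rw [Fin.snoc_castSucc]
        exact hle (hv i)
    constructor
    · intro h z
      obtain ⟨G', hle, hG', y, hy⟩ := hG.back z
      exact (hsnoc hle hG' hy).1 (h y)
    · intro h z
      obtain ⟨G', hle, hG', y, hy⟩ := hG.forth z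
      exact (hsnoc hle hG' hy).2 (h y)

lemma realize_diag_iff {α : Type*} (hG : IsPosition G) (φ : Language.ring.Formula α)
    {x : α → FractionRing (WittVector p κ₁)} {y : α → FractionRing (WittVector p κ₂)}
    (hxy : ∀ i, (diag _ (x i), diag _ (y i)) ∈ G) : φ.Realize x ↔ φ.Realize y := by
  have h := hG.realize_iff φ hxy (v := default) fun i ↦ i.elim0
  rw [Formula.boundedFormula_realize_eq_realize, Formula.boundedFormula_realize_eq_realize] at h
  exact (realize_diag φ x).symm.trans (h.trans (realize_diag φ y))

end IsPosition

lemma isElem_diag_comp {L : Type*} [CommRing L] (f : L →+* κ₁) {g : κ₁ →+* κ₂}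
    (hg : ∀ (n : ℕ) (φ : Language.ring.Formula (Fin n)) (x : Fin n → κ₁),
      φ.Realize (g ∘ x) ↔ φ.Realize x) :
    IsElem ((diag κ₁).comp f) ((diag κ₂).comp (g.comp f)) := fun φ ↦
  let e : κ₁ ↪ₑ[Language.ring] κ₂ := ⟨g, hg⟩
  (realize_diag φ f).trans <| (e.map_formula φ f).symm.trans (realize_diag φ (g ∘ f)).symm

lemma diag_mem_wittCorr_lead {L : Type*} [Field L] [CharP L p] [PerfectRing L p]
    (g : κ₁ →+* κ₂) {f : L →+* κ₁} {γ : ℤ} {t : WittVector p κ₁} (ht : t.coeff 0 ≠ 0)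
    (hrange : ∀ j, t.coeff j ∈ Set.range f) {a : FractionRing (WittVector p κ₁)}
    (ha : a = (p : FractionRing (WittVector p κ₁)) ^ γ * algebraMap _ _ t) :
    (diag _ a, diag _ (wittFractionMap p κ₁ κ₂ g a)) ∈
      (wittCorr (p := p) ((diag κ₁).comp f) ((diag κ₂).comp (g.comp f))).lead := by
  obtain ⟨s, rfl⟩ := exists_map_eq_of_coeff_mem_range hrange
  have hmap : wittFractionMap p κ₁ κ₂ g a = (p : FractionRing (WittVector p κ₂)) ^ γ *
      algebraMap _ _ (WittVector.map (g.comp f) s) := by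
    rw [ha, map_mul, map_zpow₀, map_natCast, wittFractionMap_algebraMap]
    rfl
  refine Or.inr ⟨fun _ ↦ γ, s, fun h0 ↦ ht ?_, ?_, ?_⟩
  · rw [WittVector.map_coeff, h0, map_zero]
  · rw [ha]
    exact hasReduction_diag f γ s
  · rw [hmap]
    exact hasReduction_diag (g.comp f) γ s

theorem exists_isPosition {g : κ₁ →+* κ₂}
    (hg : ∀ (n : ℕ) (φ : Language.ring.Formula (Fin n)) (x : Fin n → κ₁),
      φ.Realize (g ∘ x) ↔ φ.Realize x)
    {A : Set (FractionRing (WittVector p κ₁))} (hA : A.Countable) :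
    ∃ G : Subring (WittUltrapower p κ₁ × WittUltrapower p κ₂), IsPosition G ∧
      ∀ a ∈ A, (diag _ a, diag _ (wittFractionMap p κ₁ κ₂ g a)) ∈ G := by
  obtain ⟨B, hAB, hBc, -⟩ := exists_countable_subfield hA
  have : Countable B := hBc.to_subtype
  choose γ t ht hb using
    fun b : {b : B // (b : FractionRing (WittVector p κ₁)) ≠ 0} ↦ exists_zpow_mul b.2
  obtain ⟨L, _, _, _, _, f, hT⟩ := exists_countable_perfectField p
    (Set.countable_range fun bj : {b : B // (b : FractionRing (WittVector p κ₁)) ≠ 0} × ℕ ↦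
      (t bj.1).coeff bj.2)
  refine ⟨B.toSubring.map ((diag _).prod ((diag _).comp (wittFractionMap p κ₁ κ₂ g))),
    ⟨hBc.image _, L, inferInstance, inferInstance, inferInstance, inferInstance, _, _,
      isElem_diag_comp f hg, ?_⟩, fun a ha ↦ ⟨a, hAB ha, rfl⟩⟩
  rintro _ ⟨b, hbB, rfl⟩
  rcases eq_or_ne b 0 with rfl | hb0
  · exact Or.inl (map_zero _)
  · exact diag_mem_wittCorr_lead g (ht ⟨⟨b, hbB⟩, hb0⟩) (fun j ↦ hT ⟨(_, j), rfl⟩)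
      (hb ⟨⟨b, hbB⟩, hb0⟩)

end BackAndForth

/-- Let `p` be a prime and `k₁ ⊆ k₂` perfect fields of characteristic `p`
such that `k₁` is an elementary substructure of `k₂` in the language of rings.  Then the
induced embedding of the fraction field of `W(k₁)` into the fraction field of `W(k₂)` is
elementary in the language of rings. -/
theorem witt_fraction_field_embedding_elementary
    (g : k₁ →+* k₂)
    (helem : ∀ (n : ℕ) (φ : Language.ring.Formula (Fin n)) (x : Fin n → k₁),
      letI := compatibleRingOfRing k₁
      letI := compatibleRingOfRing k₂
      φ.Realize (⇑g ∘ x) ↔ φ.Realize x) :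
    ∀ (n : ℕ) (φ : Language.ring.Formula (Fin n))
      (x : Fin n → FractionRing (WittVector p k₁)),
      letI := compatibleRingOfRing (FractionRing (WittVector p k₁))
      letI := compatibleRingOfRing (FractionRing (WittVector p k₂))
      φ.Realize (⇑(wittFractionMap p k₁ k₂ g) ∘ x) ↔ φ.Realize x := by
  intro n φ x
  obtain ⟨G, hG, hxG⟩ := exists_isPosition helem (Set.countable_range x)
  exact (hG.realize_diag_iff φ fun i ↦ hxG (x i) ⟨i, rfl⟩).symm

end
end
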